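/- arXiv:1810.07295 — 3 statements merged into one kernel-verified Lean document; each statement's English description precedes it below -/
import Mathlib

section
/- Let a, b, m, n be positive integers with a·m − b·n ∈ {−1, 1}. Let ρ > 0, let g be holomorphic on the disc D(0,ρ) ⊆ ℂ, let f be holomorphic on D(0,ρ) \ {0}, and suppose there is r > 0 with r^(n+m) < ρ and a holomorphic function F on the polydisc P = {(x,y) ∈ ℂ² : |x| < r, |y| < r} such that F(x,y) = x^a·y^b·f(x^n·y^m) whenever x·y ≠ 0, F(0,0) = 0 and the Fréchet derivative of F at (0,0) is zero. Define on P the vector fields X(x,y) = x^a·y^b·(m·x, −n·y) and Y(x,y) = g(x^n·y^m)·( x·(−b·m + F(x,y)), y·(a·m − (n/m)·F(x,y)) ). If either (1) g(0) ≠ 0, or (2) g(0) = 0, g''(0) = 0, f₀ = 0 and g'(0) ≠ 0, then there exists ε ∈ (0, r) such that X and Y generate a maximal local ℂ²-action on the polydisc B_ε = {(x,y) : |x| < ε, |y| < ε}. -/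
open Set Filter Metric Complex Real

/-- A maximal local `ℂ²`-action generated by the commuting holomorphic vector fields
`X`, `Y` on the open set `Ω`: a pair `(W, Φ)` with `W ⊆ ℂ² × Ω` open and connected
containing `{0} × Ω`, `Φ : W → Ω` holomorphic, `Φ(0,p) = p`,
`Φ(v+v',p) = Φ(v,Φ(v',p))` whenever both sides are defined, `∂Φ/∂T = X∘Φ`,
`∂Φ/∂S = Y∘Φ`, and such that along any sequence in `W_p` converging to a frontier point
of `W_p` the points `Φ(vᵢ,p)` eventually leave every compact subset of `Ω`. -/
def IsMaxLocalC2Action {E : Type*} [NormedAddCommGroup E] [NormedSpace ℂ E]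
    (Ω : Set E) (X Y : E → E) (W : Set ((ℂ × ℂ) × E)) (Φ : (ℂ × ℂ) × E → E) : Prop :=
  IsOpen W ∧ IsPreconnected W ∧
  (∀ p ∈ Ω, (((0 : ℂ), (0 : ℂ)), p) ∈ W) ∧
  (∀ w ∈ W, w.2 ∈ Ω) ∧
  (∀ w ∈ W, Φ w ∈ Ω) ∧
  DifferentiableOn ℂ Φ W ∧
  (∀ p ∈ Ω, Φ (((0 : ℂ), (0 : ℂ)), p) = p) ∧
  (∀ (v v' : ℂ × ℂ) (p : E), (v + v', p) ∈ W → (v', p) ∈ W → (v, Φ (v', p)) ∈ W →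
    Φ (v + v', p) = Φ (v, Φ (v', p))) ∧
  (∀ w ∈ W, HasDerivAt (fun T : ℂ => Φ ((T, w.1.2), w.2)) (X (Φ w)) w.1.1) ∧
  (∀ w ∈ W, HasDerivAt (fun S : ℂ => Φ ((w.1.1, S), w.2)) (Y (Φ w)) w.1.2) ∧
  (∀ p ∈ Ω, ∀ K ⊆ Ω, IsCompact K → ∀ v : ℕ → ℂ × ℂ, (∀ i, (v i, p) ∈ W) →
    ∀ vl ∈ frontier {u : ℂ × ℂ | (u, p) ∈ W}, Tendsto v atTop (nhds vl) →
    ∀ᶠ i in atTop, Φ (v i, p) ∉ K)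

/-!
In the torus coordinates `t = x ^ a * y ^ b`, `u = x ^ n * y ^ m` the field `X` is `± t² ∂/∂t` and
`Y` is a combination of `t ∂/∂t` and `u ∂/∂u` with coefficients in `g(u) F` and `g(u)`, where
`F = t f(u)`. A change of coordinates `t ↦ t / (1 + N)`, `u ↦ u * k u` with `N` homogeneous of
degree one in `t` keeps the form of `X`. Averaging over the circles `u ↦ exp(iθ) u` yields a
holomorphic `N` that removes every Laurent term of `f` except `f₀`, while `k` normalizes `g` to a
constant in case (1) and to a multiple of `u` in case (2). What remains is the model
`l t² ∂/∂t`, `c t² ∂/∂t + h(u) u ∂/∂u`, where `c` is a multiple of `f₀ g(0)`. Its flow divides `t`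
and `u` by explicit entire functions, so it is defined until the orbit leaves `ℂ²`, which makes it
maximal. Both maximality and the group law survive pulling back along the chart and restricting to
a small ball, provided the domain is replaced by the connected component of the zero section.
-/

open scoped Topology

section HolomorphicOfClassC1

variable {E G : Type*} [NormedAddCommGroup E] [NormedSpace ℂ E] [NormedAddCommGroup G]
  [NormedSpace ℂ G] {f : E → G} {p : E}

lemma exists_dist_le_mul_dist_of_eventually_differentiableAt
    (hf : ∀ᶠ q in 𝓝 p, DifferentiableAt ℂ f q) :
    ∃ C, ∃ R > 0, (∀ x ∈ ball p R, DifferentiableAt ℂ f x) ∧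
      ∀ x ∈ ball p R, ∀ y ∈ ball p R, dist (f y) (f x) ≤ C * dist y x := by
  have hbound : ∀ᶠ q in 𝓝 p, dist (f q) (f p) < 1 :=
    hf.self_of_nhds.continuousAt.eventually (ball_mem_nhds _ one_pos)
  obtain ⟨R, hR, hball⟩ := Metric.eventually_nhds_iff_ball.1 (hf.and hbound)
  refine ⟨2 / (R / 2), R / 4, by positivity,
    fun x hx ↦ (hball x (ball_subset_ball (by linarith) hx)).1, fun x hx y hy ↦ ?_⟩
  rw [mem_ball] at hx hy
  have hsub : ball x (R / 2) ⊆ ball p R := ball_subset_ball' (by linarith)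
  refine dist_le_div_mul_dist_of_mapsTo_ball
    (fun z hz ↦ (hball z (hsub hz)).1.differentiableWithinAt) (fun z hz ↦ ?_) ?_
  · have hz1 := (hball z (hsub hz)).2
    have hx1 := (hball x (hsub (mem_ball_self (by positivity)))).2
    rw [mem_closedBall]
    linarith [dist_triangle_right (f z) (f x) (f p)]
  · rw [mem_ball]
    linarith [dist_triangle_right y x p]

-- The Schwarz lemma is applied to the increment `w ↦ f (w + (q - p)) - f w`.
lemma continuousAt_fderiv_of_eventually_differentiableAt
    (hf : ∀ᶠ q in 𝓝 p, DifferentiableAt ℂ f q) : ContinuousAt (fderiv ℂ f) p := by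
  obtain ⟨C, R, hR, hdiff, hlip⟩ := exists_dist_le_mul_dist_of_eventually_differentiableAt hf
  have hlipAt : ∀ q ∈ ball p (R / 2),
      dist (fderiv ℂ f q) (fderiv ℂ f p) ≤ 2 * C / (R / 2) * dist q p := by
    intro q hq
    have hmem : ∀ w ∈ ball p (R / 2), w ∈ ball p R ∧ w + (q - p) ∈ ball p R := by
      intro w hw
      rw [mem_ball_iff_norm] at hq hw ⊢
      rw [mem_ball_iff_norm]
      refine ⟨by linarith, ?_⟩
      calc ‖w + (q - p) - p‖ = ‖(w - p) + (q - p)‖ := by congr 1; abel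
        _ ≤ ‖w - p‖ + ‖q - p‖ := norm_add_le _ _
        _ < R := by linarith
    set Δ : E → G := fun w ↦ f (w + (q - p)) - f w with hΔ
    have hp : p ∈ ball p (R / 2) := mem_ball_self (by positivity)
    have hΔnorm : ∀ w ∈ ball p (R / 2), ‖Δ w‖ ≤ C * dist q p := by
      intro w hw
      simpa [dist_eq_norm, hΔ] using hlip w (hmem w hw).1 _ (hmem w hw).2
    have hΔderiv : ∀ w ∈ ball p (R / 2),
        HasFDerivAt Δ (fderiv ℂ f (w + (q - p)) - fderiv ℂ f w) w := fun w hw ↦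
      ((hasFDerivAt_comp_add_right _).2 (hdiff _ (hmem w hw).2).hasFDerivAt).sub
        (hdiff w (hmem w hw).1).hasFDerivAt
    have hschwarz : ‖fderiv ℂ Δ p‖ ≤ 2 * (C * dist q p) / (R / 2) := by
      refine norm_fderiv_le_div_of_mapsTo_ball
        (fun w hw ↦ (hΔderiv w hw).differentiableAt.differentiableWithinAt)
        (fun w hw ↦ ?_) (by positivity)
      rw [mem_closedBall, dist_eq_norm]
      linarith [norm_sub_le (Δ w) (Δ p), hΔnorm w hw, hΔnorm p hp]
    rw [(hΔderiv p hp).fderiv, add_sub_cancel] at hschwarz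
    rw [dist_eq_norm]
    exact hschwarz.trans_eq (by ring)
  exact continuousAt_of_locally_lipschitz (half_pos hR) _ hlipAt

lemma continuousOn_fderiv_of_differentiableOn {U : Set E} (hU : IsOpen U)
    (hf : DifferentiableOn ℂ f U) : ContinuousOn (fderiv ℂ f) U := fun _ hp ↦
  (continuousAt_fderiv_of_eventually_differentiableAt
    (hf.eventually_differentiableAt (hU.mem_nhds hp))).continuousWithinAt

lemma contDiffAt_one_of_eventually_differentiableAt
    (hf : ∀ᶠ q in 𝓝 p, DifferentiableAt ℂ f q) : ContDiffAt ℂ 1 f p :=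
  contDiffAt_one_iff.2 ⟨fderiv ℂ f, _, hf.eventually_nhds, fun _ hq ↦
    (continuousAt_fderiv_of_eventually_differentiableAt hq).continuousWithinAt,
    fun _ hq ↦ hq.self_of_nhds.hasFDerivAt⟩

end HolomorphicOfClassC1

section LocalAction

variable {E E' : Type*} [NormedAddCommGroup E] [NormedSpace ℂ E] [NormedAddCommGroup E']
  [NormedSpace ℂ E'] {Ω : Set E} {X Y : E → E} {W : Set ((ℂ × ℂ) × E)} {Φ : (ℂ × ℂ) × E → E}

/-- A local holomorphic `ℂ²`-action on `Ω` with `∂Φ/∂T = X ∘ Φ` and `∂Φ/∂S = Y ∘ Φ` whose domain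
`W` is not required to be connected. Maximality is encoded by `closed`: a time at which an orbit
converges in `Ω` belongs to the domain. -/
structure IsClosedLocalC2Action (Ω : Set E) (X Y : E → E) (W : Set ((ℂ × ℂ) × E))
    (Φ : (ℂ × ℂ) × E → E) : Prop where
  isOpen : IsOpen W
  zero_mem : ∀ p ∈ Ω, ((0, 0), p) ∈ W
  snd_mem : ∀ w ∈ W, w.2 ∈ Ω
  map_mem : ∀ w ∈ W, Φ w ∈ Ω
  differentiableAt : ∀ w ∈ W, DifferentiableAt ℂ Φ w
  map_zero : ∀ p ∈ Ω, Φ ((0, 0), p) = p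
  map_add : ∀ v v' p, (v + v', p) ∈ W → (v', p) ∈ W → (v, Φ (v', p)) ∈ W →
    Φ (v + v', p) = Φ (v, Φ (v', p))
  hasDerivAt_fst : ∀ w ∈ W, HasDerivAt (fun T ↦ Φ ((T, w.1.2), w.2)) (X (Φ w)) w.1.1
  hasDerivAt_snd : ∀ w ∈ W, HasDerivAt (fun S ↦ Φ ((w.1.1, S), w.2)) (Y (Φ w)) w.1.2
  closed : ∀ p ∈ Ω, ∀ q ∈ Ω, ∀ (v : ℕ → ℂ × ℂ) (vl : ℂ × ℂ), (∀ i, (v i, p) ∈ W) →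
    Tendsto v atTop (𝓝 vl) → Tendsto (fun i ↦ Φ (v i, p)) atTop (𝓝 q) → (vl, p) ∈ W

namespace IsClosedLocalC2Action

lemma zero_mem_connectedComponentIn (h : IsClosedLocalC2Action Ω X Y W Φ)
    (hΩ : IsPreconnected Ω) {p₀ p : E} (hp₀ : p₀ ∈ Ω) (hp : p ∈ Ω) :
    ((0, 0), p) ∈ connectedComponentIn W ((0, 0), p₀) := by
  have hslice : IsPreconnected ((fun q : E ↦ (((0 : ℂ), (0 : ℂ)), q)) '' Ω) :=
    hΩ.image _ (by fun_prop)
  refine hslice.subset_connectedComponentIn ⟨p₀, hp₀, rfl⟩ ?_ ⟨p, hp, rfl⟩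
  rintro _ ⟨q, hq, rfl⟩
  exact h.zero_mem q hq

lemma exists_isMaxLocalC2Action (h : IsClosedLocalC2Action Ω X Y W Φ)
    (hΩ : IsConnected Ω) : ∃ W₀, IsMaxLocalC2Action Ω X Y W₀ Φ := by
  obtain ⟨p₀, hp₀⟩ := hΩ.nonempty
  let _ : NormedSpace ℝ E := NormedSpace.restrictScalars ℝ ℂ E
  set W₀ := connectedComponentIn W ((0, 0), p₀)
  have hsub : W₀ ⊆ W := connectedComponentIn_subset _ _
  have hopen : IsOpen W₀ := h.isOpen.connectedComponentIn
  have hrelClosed : ∀ w ∈ W, w ∈ closure W₀ → w ∈ W₀ := fun w hw hcl ↦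
    (isPreconnected_connectedComponentIn.subset_closure (subset_insert _ _)
      (insert_subset hcl subset_closure)).subset_connectedComponentIn
      (mem_insert_of_mem _ (mem_connectedComponentIn (h.zero_mem p₀ hp₀)))
      (insert_subset hw hsub) (mem_insert _ _)
  refine ⟨W₀, hopen, isPreconnected_connectedComponentIn,
    fun p hp ↦ h.zero_mem_connectedComponentIn hΩ.isPreconnected hp₀ hp,
    fun w hw ↦ h.snd_mem w (hsub hw), fun w hw ↦ h.map_mem w (hsub hw),
    fun w hw ↦ (h.differentiableAt w (hsub hw)).differentiableWithinAt, h.map_zero,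
    fun v v' p h₁ h₂ h₃ ↦ h.map_add v v' p (hsub h₁) (hsub h₂) (hsub h₃),
    fun w hw ↦ h.hasDerivAt_fst w (hsub hw), fun w hw ↦ h.hasDerivAt_snd w (hsub hw), ?_⟩
  intro p hp K hKΩ hK v hv vl hvl hlim
  by_contra hfreq
  simp only [Filter.not_eventually, not_not] at hfreq
  obtain ⟨q, hqK, s, hs, hsq⟩ := hK.tendsto_subseq' hfreq
  have hvlW : (vl, p) ∈ W := h.closed p hp q (hKΩ hqK) (v ∘ s) vl (fun i ↦ hsub (hv (s i)))
    (hlim.comp hs.tendsto_atTop) hsq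
  have hvlW₀ : (vl, p) ∈ W₀ := hrelClosed _ hvlW <|
    mem_closure_of_tendsto (hlim.prodMk_nhds tendsto_const_nhds) (Eventually.of_forall hv)
  have hslice : IsOpen {u : ℂ × ℂ | (u, p) ∈ W₀} := hopen.preimage (by fun_prop)
  rw [hslice.frontier_eq] at hvl
  exact hvl.2 hvlW₀

end IsClosedLocalC2Action

variable {Ω' : Set E'} {X' Y' : E' → E'} {D : Set ((ℂ × ℂ) × E')} {A : (ℂ × ℂ) × E' → E'}
  {e : OpenPartialHomeomorph E E'}

lemma hasDerivAt_symm_comp_of_fderiv_eq (he : DifferentiableOn ℂ e e.source)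
    (he' : DifferentiableOn ℂ e.symm e.target) (hX : ∀ q ∈ e.source, fderiv ℂ e q (X q) = X' (e q))
    {γ : ℂ → E'} {z : ℂ} (hz : γ z ∈ e.target) (hγ : HasDerivAt γ (X' (γ z)) z) :
    HasDerivAt (fun w ↦ e.symm (γ w)) (X (e.symm (γ z))) z := by
  have hsymm : HasFDerivAt e.symm (fderiv ℂ e.symm (γ z)) (γ z) :=
    (he'.differentiableAt (e.open_target.mem_nhds hz)).hasFDerivAt
  have hq : e.symm (γ z) ∈ e.source := e.map_target hz
  have hfor : HasFDerivAt e (fderiv ℂ e (e.symm (γ z))) (e.symm (γ z)) :=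
    (he.differentiableAt (e.open_source.mem_nhds hq)).hasFDerivAt
  have hid : (fderiv ℂ e.symm (γ z)).comp (fderiv ℂ e (e.symm (γ z))) =
      ContinuousLinearMap.id ℂ E := by
    rw [← e.right_inv hz] at hsymm
    refine (e.right_inv hz ▸ hsymm.comp _ hfor).unique
      ((hasFDerivAt_id _).congr_of_eventuallyEq ?_)
    exact e.eventually_left_inverse hq
  have hval : fderiv ℂ e.symm (γ z) (X' (γ z)) = X (e.symm (γ z)) := by
    rw [← congrArg X' (e.right_inv hz), ← hX _ hq]
    exact DFunLike.congr_fun hid _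
  exact hval ▸ hsymm.comp_hasDerivAt z hγ

lemma IsClosedLocalC2Action.comap (h : IsClosedLocalC2Action Ω' X' Y' D A)
    (hΩ' : e.target ⊆ Ω') (he : DifferentiableOn ℂ e e.source)
    (he' : DifferentiableOn ℂ e.symm e.target)
    (hX : ∀ q ∈ e.source, fderiv ℂ e q (X q) = X' (e q))
    (hY : ∀ q ∈ e.source, fderiv ℂ e q (Y q) = Y' (e q)) :
    IsClosedLocalC2Action e.source X Y
      {w | w.2 ∈ e.source ∧ (w.1, e w.2) ∈ D ∧ A (w.1, e w.2) ∈ e.target}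
      (fun w ↦ e.symm (A (w.1, e w.2))) := by
  have hpair {w : (ℂ × ℂ) × E} (hw : w.2 ∈ e.source) :
      DifferentiableAt ℂ (fun w : (ℂ × ℂ) × E ↦ (w.1, e w.2)) w :=
    differentiableAt_fst.prodMk
      ((he.differentiableAt (e.open_source.mem_nhds hw)).comp w differentiableAt_snd)
  have hA {w : (ℂ × ℂ) × E} (hw : w.2 ∈ e.source) (hD : (w.1, e w.2) ∈ D) :
      DifferentiableAt ℂ (fun w : (ℂ × ℂ) × E ↦ A (w.1, e w.2)) w :=
    (h.differentiableAt _ hD).comp w (hpair hw)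
  refine ⟨?_, fun p hp ↦ ?_, fun w hw ↦ hw.1, fun w hw ↦ e.map_target hw.2.2, fun w hw ↦
    (he'.differentiableAt (e.open_target.mem_nhds hw.2.2)).comp w (hA hw.1 hw.2.1),
    fun p hp ↦ ?_, fun v v' p hvv' hv' hv ↦ ?_, fun w hw ↦ ?_, fun w hw ↦ ?_, ?_⟩
  · refine isOpen_iff_mem_nhds.2 fun w ⟨hw, hD, ht⟩ ↦ ?_
    filter_upwards [continuousAt_snd (e.open_source.mem_nhds hw),
      (hpair hw).continuousAt (h.isOpen.mem_nhds hD),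
      (hA hw hD).continuousAt (e.open_target.mem_nhds ht)] with x h₁ h₂ h₃ using ⟨h₁, h₂, h₃⟩
  · have hep := e.map_source hp
    exact ⟨hp, h.zero_mem _ (hΩ' hep), by simpa only [h.map_zero _ (hΩ' hep)] using hep⟩
  · simp only [h.map_zero _ (hΩ' (e.map_source hp)), e.left_inv hp]
  · have hright := e.right_inv hv'.2.2
    have hD := hv.2.1
    simp only [hright] at hD ⊢
    rw [h.map_add v v' _ hvv'.2.1 hv'.2.1 hD]
  · exact hasDerivAt_symm_comp_of_fderiv_eq he he' hX hw.2.2 (h.hasDerivAt_fst _ hw.2.1)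
  · exact hasDerivAt_symm_comp_of_fderiv_eq he he' hY hw.2.2 (h.hasDerivAt_snd _ hw.2.1)
  · intro p hp q hq v vl hv hvl hlim
    have hAlim : Tendsto (fun i ↦ A (v i, e p)) atTop (𝓝 (e q)) :=
      ((e.continuousAt hq).tendsto.comp hlim).congr fun i ↦ e.right_inv (hv i).2.2
    have hD := h.closed (e p) (hΩ' (e.map_source hp)) (e q) (hΩ' (e.map_source hq)) v vl
      (fun i ↦ (hv i).2.1) hvl hAlim
    have hval : A (vl, e p) = e q := tendsto_nhds_unique
      ((h.differentiableAt _ hD).continuousAt.tendsto.comp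
        (hvl.prodMk_nhds tendsto_const_nhds)) hAlim
    exact ⟨hp, hD, by simpa only [hval] using e.map_source hq⟩

end LocalAction

section Chart

variable {E E' : Type*} [NormedAddCommGroup E] [NormedSpace ℂ E] [CompleteSpace E]
  [NormedAddCommGroup E'] [NormedSpace ℂ E'] {x : E} {ψ : E → E'} {ψ' : E ≃L[ℂ] E'}

lemma eventually_exists_openPartialHomeomorph_ball (hψ : ContDiffAt ℂ 1 ψ x)
    (hψ' : HasFDerivAt ψ (ψ' : E →L[ℂ] E') x) :
    ∀ᶠ ε in 𝓝[>] (0 : ℝ), ∃ e : OpenPartialHomeomorph E E', ⇑e = ψ ∧ e.source = ball x ε ∧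
      DifferentiableOn ℂ e e.source ∧ DifferentiableOn ℂ e.symm e.target := by
  set e₀ := hψ.toOpenPartialHomeomorph ψ hψ' one_ne_zero
  have hx : x ∈ e₀.source := hψ.mem_toOpenPartialHomeomorph_source hψ' one_ne_zero
  have hsymm : ContDiffAt ℂ 1 e₀.symm (ψ x) := hψ.to_localInverse hψ' one_ne_zero
  have hgood : ∀ᶠ q in 𝓝 x, q ∈ e₀.source ∧ DifferentiableAt ℂ ψ q ∧
      DifferentiableAt ℂ e₀.symm (ψ q) := by
    filter_upwards [e₀.open_source.mem_nhds hx, hψ.eventually (by decide),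
      hψ.continuousAt.eventually (hsymm.eventually (by decide))] with q h₁ h₂ h₃
      using ⟨h₁, h₂.differentiableAt one_ne_zero, h₃.differentiableAt one_ne_zero⟩
  obtain ⟨R, hR, hball⟩ := Metric.eventually_nhds_iff_ball.1 hgood
  filter_upwards [Ioo_mem_nhdsGT hR] with ε hε
  have hgood' : ∀ q ∈ ball x ε, _ := fun q hq ↦ hball q (ball_subset_ball hε.2.le hq)
  refine ⟨e₀.restrOpen (ball x ε) isOpen_ball, rfl, ?_, fun q hq ↦ ?_, fun y hy ↦ ?_⟩
  · exact inter_eq_right.2 fun q hq ↦ (hgood' q hq).1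
  · exact (hgood' q hq.2).2.1.differentiableWithinAt
  · have hy' := (hgood' _ ((e₀.restrOpen (ball x ε) isOpen_ball).map_target hy).2).2.2
    rw [show ψ (_ : E) = y from (e₀.restrOpen (ball x ε) isOpen_ball).right_inv hy] at hy'
    exact hy'.differentiableWithinAt

lemma IsClosedLocalC2Action.eventually_exists_isMaxLocalC2Action_ball {X Y : E → E}
    {X' Y' : E' → E'} {D : Set ((ℂ × ℂ) × E')} {A : (ℂ × ℂ) × E' → E'}
    (h : IsClosedLocalC2Action univ X' Y' D A) (hψ : ContDiffAt ℂ 1 ψ x)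
    (hψ' : HasFDerivAt ψ (ψ' : E →L[ℂ] E') x)
    (hX : ∀ᶠ q in 𝓝 x, fderiv ℂ ψ q (X q) = X' (ψ q))
    (hY : ∀ᶠ q in 𝓝 x, fderiv ℂ ψ q (Y q) = Y' (ψ q)) :
    ∀ᶠ ε in 𝓝[>] (0 : ℝ), ∃ W Φ, IsMaxLocalC2Action (ball x ε) X Y W Φ := by
  obtain ⟨R, hR, hball⟩ := Metric.eventually_nhds_iff_ball.1 (hX.and hY)
  filter_upwards [eventually_exists_openPartialHomeomorph_ball hψ hψ', Ioo_mem_nhdsGT hR]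
    with ε ⟨e, heψ, hsource, he, he'⟩ hε
  have hsub : e.source ⊆ ball x R := hsource ▸ ball_subset_ball hε.2.le
  let _ : NormedSpace ℝ E := NormedSpace.restrictScalars ℝ ℂ E
  have hconn : IsConnected (ball x ε) :=
    ⟨nonempty_ball.2 hε.1, (convex_ball x ε).isPreconnected⟩
  have haction := h.comap (subset_univ _) he he'
    (fun q hq ↦ heψ ▸ (hball q (hsub hq)).1) (fun q hq ↦ heψ ▸ (hball q (hsub hq)).2)
  rw [hsource] at haction
  obtain ⟨W₀, hW₀⟩ := haction.exists_isMaxLocalC2Action hconn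
  exact ⟨W₀, _, hW₀⟩

end Chart

section UnimodularPair

/-- A pair of monomials `t = x ^ a * y ^ b` and `u = x ^ n * y ^ m` whose exponent matrix has
determinant `±1`, so that `(t, u)` are coordinates of the torus `{(x, y) | x * y ≠ 0}`. -/
structure UnimodularPair where
  (a b n m : ℕ)
  det_mul_self : ((a * m : ℤ) - b * n) * (a * m - b * n) = 1

lemma hasDerivAt_zpow_mul_zpow {σ τ : ℂ → ℂ} {σ' τ' z : ℂ} (hσ : HasDerivAt σ σ' z)
    (hτ : HasDerivAt τ τ' z) (hσ₀ : σ z ≠ 0) (hτ₀ : τ z ≠ 0) (i j : ℤ) :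
    HasDerivAt (fun w ↦ σ w ^ i * τ w ^ j)
      ((σ' / σ z * i + τ' / τ z * j) * (σ z ^ i * τ z ^ j)) z := by
  refine (((hasDerivAt_zpow i (σ z) (.inl hσ₀)).comp z hσ).mul
    ((hasDerivAt_zpow j (τ z) (.inl hτ₀)).comp z hτ)).congr_deriv ?_
  simp only [Function.comp_apply, zpow_sub_one₀ hσ₀, zpow_sub_one₀ hτ₀]
  ring

namespace UnimodularPair

variable (P : UnimodularPair) {σ τ : ℂ}

/-- The determinant of the exponent matrix. -/
def det : ℤ := P.a * P.m - P.b * P.n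

/-- The first monomial of the pair. -/
def t (q : ℂ × ℂ) : ℂ := q.1 ^ P.a * q.2 ^ P.b

/-- The second monomial of the pair. -/
def u (q : ℂ × ℂ) : ℂ := q.1 ^ P.n * q.2 ^ P.m

/-- The point of the torus with `t = σ` and `u = τ`. It acts on `ℂ²` by the componentwise
product. -/
noncomputable def torus (σ τ : ℂ) : ℂ × ℂ :=
  (σ ^ (P.det * P.m) * τ ^ (-P.det * P.b), σ ^ (-P.det * P.n) * τ ^ (P.det * P.a))

/-- The vector dual to `t` in the Lie algebra of the torus: the field `q ↦ tDual * q` is the Euler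
field `t ∂/∂t` of the coordinates `(t, u)`. -/
def tDual : ℂ × ℂ := (P.det * P.m, -P.det * P.n)

/-- The vector dual to `u` in the Lie algebra of the torus: the field `q ↦ uDual * q` is the Euler
field `u ∂/∂u` of the coordinates `(t, u)`. -/
def uDual : ℂ × ℂ := (-P.det * P.b, P.det * P.a)

/-- The value at `q` of the vector field `α t ∂/∂t + β u ∂/∂u`. -/
def field (α β : ℂ) (q : ℂ × ℂ) : ℂ × ℂ := (α • P.tDual + β • P.uDual) * q

lemma det_mul_det : (P.det : ℂ) * P.det = 1 := by
  rw [← Int.cast_mul, det, P.det_mul_self, Int.cast_one]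

lemma torus_mul_torus (σ σ' τ τ' : ℂ) :
    P.torus σ τ * P.torus σ' τ' = P.torus (σ * σ') (τ * τ') := by
  ext <;> simp only [torus, Prod.mk_mul_mk, mul_zpow] <;> ring

@[simp] lemma torus_one_one : P.torus 1 1 = 1 := by
  simp only [torus, one_zpow, mul_one, Prod.mk_one_one]

lemma t_mul (p q : ℂ × ℂ) : P.t (p * q) = P.t p * P.t q := by
  simp only [t, Prod.fst_mul, Prod.snd_mul, mul_pow]; ring

lemma u_mul (p q : ℂ × ℂ) : P.u (p * q) = P.u p * P.u q := by
  simp only [u, Prod.fst_mul, Prod.snd_mul, mul_pow]; ring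

lemma t_torus (hσ : σ ≠ 0) (hτ : τ ≠ 0) : P.t (P.torus σ τ) = σ := by
  calc P.t (P.torus σ τ)
      = σ ^ (P.det * P.m * P.a + -P.det * P.n * P.b) *
        τ ^ (-P.det * P.b * P.a + P.det * P.a * P.b) := by
        rw [zpow_add₀ hσ, zpow_add₀ hτ]
        simp only [t, torus, ← zpow_natCast, mul_zpow, ← zpow_mul]
        ring
    _ = σ ^ (P.det * P.det) * τ ^ (0 : ℤ) := by rw [det]; congr 2 <;> ring
    _ = σ := by rw [det, P.det_mul_self, zpow_one, zpow_zero, mul_one]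

lemma u_torus (hσ : σ ≠ 0) (hτ : τ ≠ 0) : P.u (P.torus σ τ) = τ := by
  calc P.u (P.torus σ τ)
      = σ ^ (P.det * P.m * P.n + -P.det * P.n * P.m) *
        τ ^ (-P.det * P.b * P.n + P.det * P.a * P.m) := by
        rw [zpow_add₀ hσ, zpow_add₀ hτ]
        simp only [u, torus, ← zpow_natCast, mul_zpow, ← zpow_mul]
        ring
    _ = σ ^ (0 : ℤ) * τ ^ (P.det * P.det) := by rw [det]; congr 2 <;> ring
    _ = τ := by rw [det, P.det_mul_self, zpow_one, zpow_zero, one_mul]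

lemma t_torus_mul (hσ : σ ≠ 0) (hτ : τ ≠ 0) (q : ℂ × ℂ) :
    P.t (P.torus σ τ * q) = σ * P.t q := by rw [t_mul, P.t_torus hσ hτ]

lemma u_torus_mul (hσ : σ ≠ 0) (hτ : τ ≠ 0) (q : ℂ × ℂ) :
    P.u (P.torus σ τ * q) = τ * P.u q := by rw [u_mul, P.u_torus hσ hτ]

lemma norm_torus_mul (hσ : ‖σ‖ = 1) (hτ : ‖τ‖ = 1) (q : ℂ × ℂ) : ‖P.torus σ τ * q‖ = ‖q‖ := by
  simp only [torus, Prod.norm_def, Prod.fst_mul, Prod.snd_mul, norm_mul, norm_zpow, hσ, hτ,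
    one_zpow, one_mul]

lemma u_zero : P.u 0 = 0 := by
  have : P.n ≠ 0 ∨ P.m ≠ 0 := by
    by_contra! h
    simpa [h.1, h.2] using P.det_mul_self
  rcases this with h | h <;> simp [u, h]

lemma u_ne_zero {q : ℂ × ℂ} (hq : q.1 * q.2 ≠ 0) : P.u q ≠ 0 :=
  mul_ne_zero (pow_ne_zero _ (left_ne_zero_of_mul hq)) (pow_ne_zero _ (right_ne_zero_of_mul hq))

lemma differentiable_t : Differentiable ℂ P.t := by unfold t; fun_prop

lemma contDiff_u {k : WithTop ℕ∞} : ContDiff ℂ k P.u := by unfold u; fun_prop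

lemma tendsto_u : Tendsto P.u (𝓝 0) (𝓝 0) := by
  simpa only [P.u_zero] using (P.contDiff_u (k := 0)).continuous.tendsto 0

lemma contDiffAt_torus {k : WithTop ℕ∞} (hσ : σ ≠ 0) (hτ : τ ≠ 0) :
    ContDiffAt ℂ k (fun s : ℂ × ℂ ↦ P.torus s.1 s.2) (σ, τ) := by
  have hzpow : ∀ i j : ℤ, ContDiffAt ℂ k (fun s : ℂ × ℂ ↦ s.1 ^ i * s.2 ^ j) (σ, τ) := fun i j ↦
    ((analyticAt_fst.fun_zpow hσ).mul (analyticAt_snd.fun_zpow hτ)).contDiffAt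
  exact (hzpow _ _).prodMk (hzpow _ _)

lemma hasDerivAt_torus_mul {σ τ : ℂ → ℂ} {q : ℂ → ℂ × ℂ} {σ' τ' z : ℂ} {q' : ℂ × ℂ}
    (hσ : HasDerivAt σ σ' z) (hτ : HasDerivAt τ τ' z) (hq : HasDerivAt q q' z)
    (hσ₀ : σ z ≠ 0) (hτ₀ : τ z ≠ 0) :
    HasDerivAt (fun w ↦ P.torus (σ w) (τ w) * q w)
      (P.field (σ' / σ z) (τ' / τ z) (P.torus (σ z) (τ z) * q z) +
        P.torus (σ z) (τ z) * q') z := by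
  have htorus : HasDerivAt (fun w ↦ P.torus (σ w) (τ w))
      (P.field (σ' / σ z) (τ' / τ z) (P.torus (σ z) (τ z))) z := by
    refine ((hasDerivAt_zpow_mul_zpow hσ hτ hσ₀ hτ₀ _ _).prodMk
      (hasDerivAt_zpow_mul_zpow hσ hτ hσ₀ hτ₀ _ _)).congr_deriv ?_
    ext <;> simp [field, tDual, uDual, torus]
  exact (htorus.mul hq).congr_deriv (by rw [field, field, mul_assoc])

lemma field_det_mul_t (q : ℂ × ℂ) :
    P.field (P.det * P.t q) 0 q =
      (q.1 ^ P.a * q.2 ^ P.b * (P.m * q.1), q.1 ^ P.a * q.2 ^ P.b * (-P.n * q.2)) := by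
  ext <;> simp only [field, t, tDual, uDual, zero_smul, add_zero, Prod.smul_mk, smul_eq_mul,
    Prod.fst_mul, Prod.snd_mul]
  · linear_combination q.1 ^ P.a * q.2 ^ P.b * P.m * q.1 * P.det_mul_det
  · linear_combination -(q.1 ^ P.a * q.2 ^ P.b * P.n * q.2) * P.det_mul_det

lemma field_det_div_mul (hm : (P.m : ℂ) ≠ 0) (γ φ : ℂ) (q : ℂ × ℂ) :
    P.field (P.det / P.m * γ * φ) (P.det * P.m * γ) q =
      (γ * (q.1 * (-(P.b * P.m) + φ)), γ * (q.2 * (P.a * P.m - P.n / P.m * φ))) := by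
  ext <;> simp only [field, tDual, uDual, Prod.smul_mk, Prod.mk_add_mk, smul_eq_mul,
    Prod.fst_mul, Prod.snd_mul] <;> field_simp
  · linear_combination γ * q.1 * (φ - P.b * P.m) * P.det_mul_det
  · linear_combination γ * q.2 * (P.a * P.m ^ 2 - P.n * φ) * P.det_mul_det

lemma field_add (α α' β β' : ℂ) (q : ℂ × ℂ) :
    P.field α β q + P.field α' β' q = P.field (α + α') (β + β') q := by
  simp only [field, add_smul, ← add_mul]; congr 1; abel

lemma torus_mul_field (α β σ τ : ℂ) (q : ℂ × ℂ) :
    P.torus σ τ * P.field α β q = P.field α β (P.torus σ τ * q) := mul_left_comm _ _ _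

end UnimodularPair

end UnimodularPair

section ModelFlow

/-- `S ↦ u / d S u` is the flow of the one-dimensional vector field `u * h u`, through the point at
infinity where `d S u = 0`. -/
structure IsFlowDenominator (h : ℂ → ℂ) (d : ℂ → ℂ → ℂ) : Prop where
  differentiable : Differentiable ℂ (fun x : ℂ × ℂ ↦ d x.1 x.2)
  zero_left (u : ℂ) : d 0 u = 1
  zero_right_ne_zero (S : ℂ) : d S 0 ≠ 0
  add_left (S S' u : ℂ) : d S' u ≠ 0 → d (S + S') u = d S (u / d S' u) * d S' u
  hasDerivAt (S u : ℂ) : d S u ≠ 0 → HasDerivAt (d · u) (-h (u / d S u) * d S u) S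

lemma isFlowDenominator_exp (μ : ℂ) :
    IsFlowDenominator (fun _ ↦ μ) (fun S _ ↦ exp (-μ * S)) where
  differentiable := by fun_prop
  zero_left _ := by rw [mul_zero, Complex.exp_zero]
  zero_right_ne_zero _ := exp_ne_zero _
  add_left _ _ _ _ := by rw [mul_add, Complex.exp_add]
  hasDerivAt S _ _ := by simpa [mul_comm] using ((hasDerivAt_id S).const_mul (-μ)).cexp

lemma isFlowDenominator_one_sub (μ : ℂ) :
    IsFlowDenominator (fun u ↦ μ * u) (fun S u ↦ 1 - μ * u * S) where
  differentiable := by fun_prop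
  zero_left _ := by ring
  zero_right_ne_zero _ := by simp
  add_left _ _ _ h := by field_simp; ring
  hasDerivAt S u h := by
    refine (((hasDerivAt_id S).const_mul (μ * u)).const_sub 1).congr_deriv ?_
    field_simp

namespace UnimodularPair

variable (P : UnimodularPair) (l c : ℂ) {h : ℂ → ℂ} {d : ℂ → ℂ → ℂ}

/-- The denominator of `t` along the model flow: the time `(T, S)` flow sends `t` to
`t / (1 - t * (l * T + c * S))`. -/
def tDenom (w : (ℂ × ℂ) × (ℂ × ℂ)) : ℂ := 1 - P.t w.2 * (l * w.1.1 + c * w.1.2)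

/-- The denominator of `u` along the model flow: the time `(T, S)` flow sends `u` to
`u / d S u`. -/
def uDenom (d : ℂ → ℂ → ℂ) (w : (ℂ × ℂ) × (ℂ × ℂ)) : ℂ := d w.1.2 (P.u w.2)

/-- The flow of the commuting fields `l t² ∂/∂t` and `c t² ∂/∂t + h(u) u ∂/∂u`, where `d` is the
flow denominator of `h`. -/
noncomputable def modelFlow (d : ℂ → ℂ → ℂ) (w : (ℂ × ℂ) × (ℂ × ℂ)) : ℂ × ℂ :=
  P.torus (P.tDenom l c w)⁻¹ (P.uDenom d w)⁻¹ * w.2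

/-- The set on which both coordinates of `modelFlow` are finite. -/
def modelDomain (d : ℂ → ℂ → ℂ) : Set ((ℂ × ℂ) × (ℂ × ℂ)) :=
  {w | P.tDenom l c w ≠ 0 ∧ P.uDenom d w ≠ 0}

variable {l c} {w : (ℂ × ℂ) × (ℂ × ℂ)}

lemma t_modelFlow (hw : w ∈ P.modelDomain l c d) :
    P.t (P.modelFlow l c d w) = P.t w.2 / P.tDenom l c w := by
  rw [modelFlow, P.t_torus_mul (inv_ne_zero hw.1) (inv_ne_zero hw.2), inv_mul_eq_div]

lemma u_modelFlow (hw : w ∈ P.modelDomain l c d) :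
    P.u (P.modelFlow l c d w) = P.u w.2 / P.uDenom d w := by
  rw [modelFlow, P.u_torus_mul (inv_ne_zero hw.1) (inv_ne_zero hw.2), inv_mul_eq_div]

lemma differentiable_tDenom : Differentiable ℂ (P.tDenom l c) := by
  have := P.differentiable_t
  unfold tDenom
  fun_prop

lemma differentiable_uDenom (hd : IsFlowDenominator h d) : Differentiable ℂ (P.uDenom d) :=
  hd.differentiable.comp (differentiable_fst.snd.prodMk
    ((P.contDiff_u.differentiable one_ne_zero).comp differentiable_snd))

lemma differentiableAt_modelFlow (hd : IsFlowDenominator h d) (hw : w ∈ P.modelDomain l c d) :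
    DifferentiableAt ℂ (P.modelFlow l c d) w := by
  have htorus := ((P.contDiffAt_torus (inv_ne_zero hw.1)
    (inv_ne_zero hw.2)).differentiableAt one_ne_zero).comp w
    ((P.differentiable_tDenom.differentiableAt.inv hw.1).prodMk
      ((P.differentiable_uDenom hd).differentiableAt.inv hw.2))
  exact htorus.mul differentiableAt_snd

lemma modelFlow_add (hd : IsFlowDenominator h d) {v v' : ℂ × ℂ} {p : ℂ × ℂ}
    (hw : (v', p) ∈ P.modelDomain l c d) :
    P.modelFlow l c d (v + v', p) = P.modelFlow l c d (v, P.modelFlow l c d (v', p)) := by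
  have ht : P.tDenom l c (v + v', p) =
      P.tDenom l c (v, P.modelFlow l c d (v', p)) * P.tDenom l c (v', p) := by
    have hcancel : P.t (P.modelFlow l c d (v', p)) * P.tDenom l c (v', p) = P.t p := by
      rw [P.t_modelFlow hw, div_mul_cancel₀ _ hw.1]
    simp only [tDenom, Prod.fst_add, Prod.snd_add] at hcancel ⊢
    linear_combination (l * v.1 + c * v.2) * hcancel
  have hu : P.uDenom d (v + v', p) =
      P.uDenom d (v, P.modelFlow l c d (v', p)) * P.uDenom d (v', p) := by
    rw [uDenom, uDenom, P.u_modelFlow hw]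
    exact hd.add_left _ _ _ hw.2
  simp only [modelFlow] at ht hu ⊢
  rw [ht, hu, mul_inv, mul_inv, ← torus_mul_torus, mul_assoc]

lemma hasDerivAt_modelFlow_curve {Q D : ℂ → ℂ} {α β z : ℂ} {p : ℂ × ℂ}
    (hQ : HasDerivAt Q (-α * Q z) z) (hD : HasDerivAt D (-β * D z) z) (hQ₀ : Q z ≠ 0)
    (hD₀ : D z ≠ 0) :
    HasDerivAt (fun w ↦ P.torus (Q w)⁻¹ (D w)⁻¹ * p)
      (P.field α β (P.torus (Q z)⁻¹ (D z)⁻¹ * p)) z := by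
  refine (P.hasDerivAt_torus_mul (hQ.fun_inv hQ₀) (hD.fun_inv hD₀) (hasDerivAt_const z p)
    (inv_ne_zero hQ₀) (inv_ne_zero hD₀)).congr_deriv ?_
  rw [mul_zero, add_zero]
  congr 1 <;> field_simp

lemma mem_modelDomain_of_tendsto (hd : IsFlowDenominator h d) {p q vl : ℂ × ℂ} {v : ℕ → ℂ × ℂ}
    (hv : ∀ i, (v i, p) ∈ P.modelDomain l c d) (hvl : Tendsto v atTop (𝓝 vl))
    (hlim : Tendsto (fun i ↦ P.modelFlow l c d (v i, p)) atTop (𝓝 q)) :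
    (vl, p) ∈ P.modelDomain l c d := by
  have hpair : Tendsto (fun i ↦ (v i, p)) atTop (𝓝 (vl, p)) := hvl.prodMk_nhds tendsto_const_nhds
  have ht : P.t q * P.tDenom l c (vl, p) = P.t p := by
    refine tendsto_nhds_unique (((P.differentiable_t.continuous.tendsto q).comp hlim).mul
      ((P.differentiable_tDenom.continuous.tendsto _).comp hpair)) ?_
    refine tendsto_const_nhds.congr fun i ↦ ?_
    simp only [Function.comp_apply, P.t_modelFlow (hv i), div_mul_cancel₀ _ (hv i).1]
  have hu : P.u q * P.uDenom d (vl, p) = P.u p := by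
    refine tendsto_nhds_unique ((((P.contDiff_u (k := 0)).continuous.tendsto q).comp hlim).mul
      (((P.differentiable_uDenom hd).continuous.tendsto _).comp hpair)) ?_
    refine tendsto_const_nhds.congr fun i ↦ ?_
    simp only [Function.comp_apply, P.u_modelFlow (hv i), div_mul_cancel₀ _ (hv i).2]
  constructor <;> intro h₀
  · rw [h₀, mul_zero] at ht
    simp [tDenom, ← ht] at h₀
  · rw [h₀, mul_zero] at hu
    exact hd.zero_right_ne_zero vl.2 (by simpa only [uDenom, ← hu] using h₀)

variable (l c) in
lemma isClosedLocalC2Action_modelFlow (hd : IsFlowDenominator h d) :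
    IsClosedLocalC2Action univ (fun q ↦ P.field (l * P.t q) 0 q)
      (fun q ↦ P.field (c * P.t q) (h (P.u q)) q) (P.modelDomain l c d) (P.modelFlow l c d) where
  isOpen := (P.differentiable_tDenom.continuous.isOpen_preimage _ isOpen_compl_singleton).inter
    ((P.differentiable_uDenom hd).continuous.isOpen_preimage _ isOpen_compl_singleton)
  zero_mem p _ := by simp [modelDomain, tDenom, uDenom, hd.zero_left]
  snd_mem _ _ := mem_univ _
  map_mem _ _ := mem_univ _
  differentiableAt _ hw := P.differentiableAt_modelFlow hd hw
  map_zero p _ := by simp [modelFlow, tDenom, uDenom, hd.zero_left]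
  map_add _ _ _ _ hw _ := P.modelFlow_add hd hw
  hasDerivAt_fst w hw := by
    refine P.hasDerivAt_modelFlow_curve ?_ ?_ hw.1 hw.2
    · rw [P.t_modelFlow hw]
      have hne := hw.1
      refine ((((hasDerivAt_id _).const_mul l).add_const (c * w.1.2)).const_mul
        (P.t w.2) |>.const_sub 1).congr_deriv ?_
      change _ = _ * P.tDenom l c w
      field_simp
    · simpa [uDenom] using hasDerivAt_const w.1.1 (d w.1.2 (P.u w.2))
  hasDerivAt_snd w hw := by
    refine P.hasDerivAt_modelFlow_curve ?_ ?_ hw.1 hw.2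
    · rw [P.t_modelFlow hw]
      have hne := hw.1
      refine ((((hasDerivAt_id _).const_mul c).const_add (l * w.1.1)).const_mul
        (P.t w.2) |>.const_sub 1).congr_deriv ?_
      change _ = _ * P.tDenom l c w
      field_simp
    · rw [P.u_modelFlow hw]
      exact hd.hasDerivAt _ _ hw.2
  closed _ _ _ _ _ _ hv hvl hlim := P.mem_modelDomain_of_tendsto hd hv hvl hlim

end UnimodularPair

end ModelFlow

section NormalForm

namespace UnimodularPair

variable (P : UnimodularPair) {G : Type*} [NormedAddCommGroup G] [NormedSpace ℂ G]
  {N : ℂ × ℂ → ℂ} {k : ℂ → ℂ} {q : ℂ × ℂ} {α β : ℂ}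

/-- The orbit of `q` under the one-parameter subgroup of the torus that generates the vector field
`P.field α β`. -/
noncomputable def orbit (α β : ℂ) (q : ℂ × ℂ) (z : ℂ) : ℂ × ℂ :=
  P.torus (exp (α * z)) (exp (β * z)) * q

/-- The derivative of `N` along the Euler field `t ∂/∂t`. -/
noncomputable def derivT (N : ℂ × ℂ → G) (q : ℂ × ℂ) : G := fderiv ℂ N q (P.tDual * q)

/-- The derivative of `N` along the Euler field `u ∂/∂u`. -/
noncomputable def derivU (N : ℂ × ℂ → G) (q : ℂ × ℂ) : G := fderiv ℂ N q (P.uDual * q)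

lemma fderiv_field (N : ℂ × ℂ → G) (α β : ℂ) (q : ℂ × ℂ) :
    fderiv ℂ N q (P.field α β q) = α • P.derivT N q + β • P.derivU N q := by
  rw [field, add_mul, smul_mul_assoc, smul_mul_assoc, map_add, map_smul, map_smul, derivT, derivU]

@[simp] lemma orbit_zero (α β : ℂ) (q : ℂ × ℂ) : P.orbit α β q 0 = q := by simp [orbit]

lemma t_orbit (α β : ℂ) (q : ℂ × ℂ) (z : ℂ) : P.t (P.orbit α β q z) = exp (α * z) * P.t q :=
  P.t_torus_mul (exp_ne_zero _) (exp_ne_zero _) q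

lemma u_orbit (α β : ℂ) (q : ℂ × ℂ) (z : ℂ) : P.u (P.orbit α β q z) = exp (β * z) * P.u q :=
  P.u_torus_mul (exp_ne_zero _) (exp_ne_zero _) q

lemma hasDerivAt_orbit (α β : ℂ) (q : ℂ × ℂ) (z : ℂ) :
    HasDerivAt (P.orbit α β q) (P.field α β (P.orbit α β q z)) z := by
  have hexp : ∀ γ : ℂ, HasDerivAt (fun z ↦ exp (γ * z)) (exp (γ * z) * γ) z := fun γ ↦ by
    simpa using ((hasDerivAt_id z).const_mul γ).cexp
  refine (P.hasDerivAt_torus_mul (hexp α) (hexp β) (hasDerivAt_const z q) (exp_ne_zero _)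
    (exp_ne_zero _)).congr_deriv ?_
  simp [orbit]

lemma hasDerivAt_comp_orbit {N : ℂ × ℂ → G} {z : ℂ}
    (hN : DifferentiableAt ℂ N (P.orbit α β q z)) :
    HasDerivAt (fun z ↦ N (P.orbit α β q z))
      (α • P.derivT N (P.orbit α β q z) + β • P.derivU N (P.orbit α β q z)) z := by
  rw [← fderiv_field]
  exact hN.hasFDerivAt.comp_hasDerivAt z (P.hasDerivAt_orbit α β q z)

lemma hasDerivAt_comp_orbit_zero {N : ℂ × ℂ → G} (hN : DifferentiableAt ℂ N q) (α β : ℂ) :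
    HasDerivAt (fun z ↦ N (P.orbit α β q z)) (α • P.derivT N q + β • P.derivU N q) 0 := by
  simpa using P.hasDerivAt_comp_orbit (α := α) (β := β) (z := 0)
    ((P.orbit_zero α β q).symm ▸ hN)

lemma hasDerivAt_comp_u_orbit_zero (hk : DifferentiableAt ℂ k (P.u q)) (α β : ℂ) :
    HasDerivAt (fun z ↦ k (P.u (P.orbit α β q z))) (deriv k (P.u q) * (β * P.u q)) 0 := by
  simp only [u_orbit]
  have hexp : HasDerivAt (fun z ↦ exp (β * z)) β 0 := by
    simpa using ((hasDerivAt_id (0 : ℂ)).const_mul β).cexp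
  exact hk.hasDerivAt.comp_of_eq 0 (hexp.mul_const _) (by simp)

/-- The change of coordinates `t ↦ t / (1 + N)`, `u ↦ u * k u`. -/
noncomputable def chart (N : ℂ × ℂ → ℂ) (k : ℂ → ℂ) (q : ℂ × ℂ) : ℂ × ℂ :=
  P.torus (1 + N q)⁻¹ (k (P.u q)) * q

lemma t_chart (hN : 1 + N q ≠ 0) (hk : k (P.u q) ≠ 0) :
    P.t (P.chart N k q) = P.t q / (1 + N q) := by
  rw [chart, P.t_torus_mul (inv_ne_zero hN) hk, inv_mul_eq_div]

lemma u_chart (hN : 1 + N q ≠ 0) (hk : k (P.u q) ≠ 0) :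
    P.u (P.chart N k q) = P.u q * k (P.u q) := by
  rw [chart, P.u_torus_mul (inv_ne_zero hN) hk, mul_comm]

lemma contDiffAt_torus_inv_one_add (hN : ContDiffAt ℂ 1 N q) (hk : ContDiffAt ℂ 1 k (P.u q))
    (hN₀ : 1 + N q ≠ 0) (hk₀ : k (P.u q) ≠ 0) :
    ContDiffAt ℂ 1 (fun q ↦ P.torus (1 + N q)⁻¹ (k (P.u q))) q :=
  (P.contDiffAt_torus (inv_ne_zero hN₀) hk₀).comp (f := fun q ↦ ((1 + N q)⁻¹, k (P.u q))) q
    (((contDiffAt_const.add hN).inv hN₀).prodMk (hk.comp q P.contDiff_u.contDiffAt))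

lemma contDiffAt_chart (hN : ContDiffAt ℂ 1 N q) (hk : ContDiffAt ℂ 1 k (P.u q))
    (hN₀ : 1 + N q ≠ 0) (hk₀ : k (P.u q) ≠ 0) : ContDiffAt ℂ 1 (P.chart N k) q :=
  (P.contDiffAt_torus_inv_one_add hN hk hN₀ hk₀).mul contDiffAt_id

lemma hasFDerivAt_chart_zero (hN : ContDiffAt ℂ 1 N 0) (hk : ContDiffAt ℂ 1 k 0)
    (hN₀ : N 0 = 0) (hk₀ : k 0 = 1) :
    HasFDerivAt (P.chart N k) (ContinuousLinearMap.id ℂ (ℂ × ℂ)) 0 := by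
  have htorus := (P.contDiffAt_torus_inv_one_add (q := 0) hN (P.u_zero.symm ▸ hk) (by simp [hN₀])
    (by simp [P.u_zero, hk₀])).differentiableAt one_ne_zero
  refine (htorus.hasFDerivAt.mul (hasFDerivAt_id 0)).congr_fderiv ?_
  simp [hN₀, hk₀, P.u_zero]

lemma fderiv_chart_field (hN : ContDiffAt ℂ 1 N q) (hk : ContDiffAt ℂ 1 k (P.u q))
    (hN₀ : 1 + N q ≠ 0) (hk₀ : k (P.u q) ≠ 0) (α β : ℂ) :
    fderiv ℂ (P.chart N k) q (P.field α β q) =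
      P.field (α - (α * P.derivT N q + β * P.derivU N q) / (1 + N q))
        (β + β * P.u q * deriv k (P.u q) / k (P.u q)) (P.chart N k q) := by
  have hσ : HasDerivAt (fun z ↦ (1 + N (P.orbit α β q z))⁻¹)
      (-(α * P.derivT N q + β * P.derivU N q) / (1 + N q) ^ 2) 0 := by
    simpa using ((P.hasDerivAt_comp_orbit_zero
      (hN.differentiableAt one_ne_zero) α β).const_add 1).fun_inv (by simpa using hN₀)
  have hcurve := P.hasDerivAt_torus_mul hσ
    (P.hasDerivAt_comp_u_orbit_zero (hk.differentiableAt one_ne_zero) α β)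
    (P.hasDerivAt_orbit α β q 0) (by simpa using hN₀) (by simpa using hk₀)
  have hchart := P.hasDerivAt_comp_orbit_zero
    ((P.contDiffAt_chart hN hk hN₀ hk₀).differentiableAt one_ne_zero) α β
  rw [fderiv_field, hchart.unique hcurve, orbit_zero, torus_mul_field, field_add]
  simp only [chart]
  congr 1 <;> field_simp <;> ring

lemma eventually_exists_isMaxLocalC2Action_ball {h β : ℂ → ℂ} {d : ℂ → ℂ → ℂ} {α : ℂ × ℂ → ℂ}
    {c : ℂ} (l : ℂ) (hd : IsFlowDenominator h d) (hN : ContDiffAt ℂ 1 N 0)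
    (hk : ContDiffAt ℂ 1 k 0) (hk₀ : k 0 = 1) (hT : ∀ᶠ q in 𝓝 0, P.derivT N q = N q)
    (hα : ∀ᶠ q in 𝓝 0, α q - β (P.u q) * P.derivU N q = c * P.t q)
    (hβ : ∀ᶠ u in 𝓝 0, β u * (k u + u * deriv k u) = k u * h (u * k u)) :
    ∀ᶠ ε in 𝓝[>] (0 : ℝ), ∃ W Φ, IsMaxLocalC2Action (ball 0 ε)
      (fun q ↦ P.field (l * P.t q) 0 q) (fun q ↦ P.field (α q) (β (P.u q)) q) W Φ := by
  have hN₀ : N 0 = 0 := by rw [← hT.self_of_nhds, derivT, mul_zero, map_zero]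
  have hgood : ∀ᶠ q in 𝓝 0, (ContDiffAt ℂ 1 N q ∧ 1 + N q ≠ 0) ∧
      (ContDiffAt ℂ 1 k (P.u q) ∧ k (P.u q) ≠ 0) :=
    ((hN.eventually (by decide)).and <| (contDiffAt_const.add hN).continuousAt.eventually_ne
      (by simp [hN₀])).and <| P.tendsto_u.eventually <|
      (hk.eventually (by decide)).and (hk.continuousAt.eventually_ne (by simp [hk₀]))
  refine (P.isClosedLocalC2Action_modelFlow l c hd).eventually_exists_isMaxLocalC2Action_ball
    (ψ := P.chart N k) (ψ' := .refl ℂ _) ?_ (P.hasFDerivAt_chart_zero hN hk hN₀ hk₀) ?_ ?_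
  · exact P.contDiffAt_chart hN (P.u_zero.symm ▸ hk) (by simp [hN₀]) (by simp [P.u_zero, hk₀])
  · filter_upwards [hgood, hT] with q ⟨⟨hNq, hNq₀⟩, hkq, hkq₀⟩ hTq
    rw [P.fderiv_chart_field hNq hkq hNq₀ hkq₀, P.t_chart hNq₀ hkq₀, hTq]
    congr 1 <;> field_simp <;> ring
  · filter_upwards [hgood, hT, hα, P.tendsto_u.eventually hβ]
      with q ⟨⟨hNq, hNq₀⟩, hkq, hkq₀⟩ hTq hαq hβq
    rw [P.fderiv_chart_field hNq hkq hNq₀ hkq₀, P.t_chart hNq₀ hkq₀, P.u_chart hNq₀ hkq₀, hTq]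
    congr 1 <;> field_simp
    · linear_combination hαq
    · linear_combination hβq

end UnimodularPair

end NormalForm

section AngularAveraging

lemma hasFDerivAt_intervalIntegral_of_continuousOn {H G : Type*} [NormedAddCommGroup H]
    [NormedSpace ℂ H] [NormedAddCommGroup G] [NormedSpace ℝ G] [NormedSpace ℂ G] {a b : ℝ}
    {K : H → ℝ → G} {K' : H → ℝ → H →L[ℂ] G} {U : Set H} {x₀ : H} (hU : IsOpen U) (hx₀ : x₀ ∈ U)
    (hK : ∀ x ∈ U, Continuous (K x)) (hKK' : ∀ x ∈ U, ∀ θ, HasFDerivAt (K · θ) (K' x θ) x)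
    (hK' : ContinuousOn (fun z : H × ℝ ↦ K' z.1 z.2) (U ×ˢ univ)) :
    HasFDerivAt (fun x ↦ ∫ θ in a..b, K x θ) (∫ θ in a..b, K' x₀ θ) x₀ := by
  have hK'₀ : Continuous (K' x₀) :=
    hK'.comp_continuous (by fun_prop : Continuous fun θ : ℝ ↦ (x₀, θ)) fun _ ↦ ⟨hx₀, mem_univ _⟩
  obtain ⟨C, hC⟩ := isCompact_uIcc.exists_bound_of_continuousOn (s := uIcc a b) hK'₀.continuousOn
  have hbound : ∀ᶠ x in 𝓝 x₀, ∀ θ ∈ uIcc a b, ‖K' x θ‖ < C + 1 := by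
    refine isCompact_uIcc.eventually_forall_of_forall_eventually fun θ hθ ↦ ?_
    exact ((hK'.continuousAt ((hU.prod isOpen_univ).mem_nhds ⟨hx₀, mem_univ θ⟩)).norm).eventually_lt
      continuousAt_const ((hC θ hθ).trans_lt (lt_add_one C))
  refine intervalIntegral.hasFDerivAt_integral_of_dominated_of_fderiv_le
    (bound := fun _ ↦ C + 1) (inter_mem (hU.mem_nhds hx₀) hbound) ?_
    ((hK x₀ hx₀).intervalIntegrable _ _) hK'₀.aestronglyMeasurable
    (.of_forall fun θ hθ x hx ↦ (hx.2 θ (uIoc_subset_uIcc hθ)).le) intervalIntegrable_const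
    (.of_forall fun θ _ x hx ↦ hKK' x hx.1 θ)
  filter_upwards [hU.mem_nhds hx₀] with x hx using (hK x hx).aestronglyMeasurable

lemma eqOn_of_forall_mul_ne_zero {G : Type*} [TopologicalSpace G] [T2Space G] {U : Set (ℂ × ℂ)}
    {f₁ f₂ : ℂ × ℂ → G} (hU : IsOpen U) (hf₁ : ContinuousOn f₁ U) (hf₂ : ContinuousOn f₂ U)
    (h : ∀ q ∈ U, q.1 * q.2 ≠ 0 → f₁ q = f₂ q) : EqOn f₁ f₂ U := by
  have hdense : Dense {q : ℂ × ℂ | q.1 * q.2 ≠ 0} := by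
    convert (dense_compl_singleton (0 : ℂ)).prod (dense_compl_singleton (0 : ℂ)) using 1
    ext q
    simp
  exact EqOn.of_subset_closure (s := U ∩ {q | q.1 * q.2 ≠ 0}) (fun q hq ↦ h q hq.1 hq.2)
    hf₁ hf₂ inter_subset_left (hdense.open_subset_closure_inter hU)

namespace UnimodularPair

variable (P : UnimodularPair) {F : ℂ × ℂ → ℂ} {f : ℂ → ℂ} {w : ℝ → ℂ} {q : ℂ × ℂ} {R : ℝ}

lemma norm_orbit_zero_I (q : ℂ × ℂ) (θ : ℝ) : ‖P.orbit 0 I q θ‖ = ‖q‖ :=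
  P.norm_torus_mul (by simp) (by simp [mul_comm I, norm_exp_ofReal_mul_I]) q

lemma continuous_orbit {S : Type*} [TopologicalSpace S] {p : S → ℂ × ℂ} {z : S → ℂ} (α β : ℂ)
    (hp : Continuous p) (hz : Continuous z) : Continuous fun s ↦ P.orbit α β (p s) (z s) := by
  have htorus : Continuous fun s ↦ P.torus (exp (α * z s)) (exp (β * z s)) :=
    continuous_iff_continuousAt.2 fun s ↦
      ContinuousAt.comp (f := fun s ↦ (exp (α * z s), exp (β * z s)))
        (P.contDiffAt_torus (k := 0) (exp_ne_zero _) (exp_ne_zero _)).continuousAt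
        (by fun_prop)
  exact htorus.mul hp

lemma orbit_fst_mul_snd_ne_zero (hq : q.1 * q.2 ≠ 0) {α β z : ℂ} :
    (P.orbit α β q z).1 * (P.orbit α β q z).2 ≠ 0 := by
  simp_all [orbit, torus, zpow_ne_zero]

lemma orbit_zero_I_mem_ball (hq : q ∈ ball 0 R) (θ : ℝ) : P.orbit 0 I q θ ∈ ball 0 R := by
  simpa only [mem_ball_zero_iff, norm_orbit_zero_I] using hq

lemma hasFDerivAt_orbit (α β z : ℂ) (q : ℂ × ℂ) :
    HasFDerivAt (fun q ↦ P.orbit α β q z)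
      (ContinuousLinearMap.mul ℂ (ℂ × ℂ) (P.orbit α β 1 z)) q := by
  simp only [orbit, mul_one]
  exact (ContinuousLinearMap.mul ℂ (ℂ × ℂ) _).hasFDerivAt

lemma continuous_comp_orbit_zero_I {G : Type*} [TopologicalSpace G] {N : ℂ × ℂ → G}
    (hN : ContinuousOn N (ball 0 R)) (hq : q ∈ ball 0 R) :
    Continuous fun θ : ℝ ↦ N (P.orbit 0 I q θ) :=
  hN.comp_continuous (P.continuous_orbit 0 I continuous_const continuous_ofReal)
    (P.orbit_zero_I_mem_ball hq)

/-- The integral of `F`, with weight `w`, over the circle `θ ↦ P.orbit 0 I q θ`, which fixes `t`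
and rotates `u`. -/
noncomputable def angularIntegral (w : ℝ → ℂ) (F : ℂ × ℂ → ℂ) (q : ℂ × ℂ) : ℂ :=
  ∫ θ in 0..2 * π, w θ * F (P.orbit 0 I q θ)

lemma hasFDerivAt_angularIntegral (hw : Continuous w) (hF : DifferentiableOn ℂ F (ball 0 R))
    (hq : q ∈ ball 0 R) : HasFDerivAt (P.angularIntegral w F) (∫ θ in 0..2 * π, w θ •
      (fderiv ℂ F (P.orbit 0 I q θ)).comp (ContinuousLinearMap.mul ℂ (ℂ × ℂ)
        (P.orbit 0 I 1 θ))) q := by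
  refine hasFDerivAt_intervalIntegral_of_continuousOn (U := ball 0 R)
    (K := fun q θ ↦ w θ * F (P.orbit 0 I q θ))
    (K' := fun q θ ↦ w θ • (fderiv ℂ F (P.orbit 0 I q θ)).comp
      (ContinuousLinearMap.mul ℂ (ℂ × ℂ) (P.orbit 0 I 1 θ))) isOpen_ball hq
    (fun q hq ↦ hw.mul (P.continuous_comp_orbit_zero_I hF.continuousOn hq))
    (fun q hq θ ↦ ((hF.differentiableAt (isOpen_ball.mem_nhds
      (P.orbit_zero_I_mem_ball hq θ))).hasFDerivAt.comp q
      (P.hasFDerivAt_orbit 0 I θ q)).const_mul (w θ)) ?_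
  have horbit : Continuous fun z : (ℂ × ℂ) × ℝ ↦ P.orbit 0 I z.1 z.2 :=
    P.continuous_orbit 0 I continuous_fst (continuous_ofReal.comp continuous_snd)
  have horbit₁ : Continuous fun z : (ℂ × ℂ) × ℝ ↦ P.orbit 0 I 1 z.2 :=
    P.continuous_orbit 0 I continuous_const (continuous_ofReal.comp continuous_snd)
  have hfderiv : ContinuousOn (fun z : (ℂ × ℂ) × ℝ ↦ fderiv ℂ F (P.orbit 0 I z.1 z.2))
      (ball 0 R ×ˢ univ) :=
    (continuousOn_fderiv_of_differentiableOn isOpen_ball hF).comp horbit.continuousOn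
      fun z hz ↦ P.orbit_zero_I_mem_ball hz.1 z.2
  exact (hw.comp continuous_snd).continuousOn.smul <| hfderiv.clm_comp
    ((ContinuousLinearMap.mul ℂ (ℂ × ℂ)).continuous.comp horbit₁).continuousOn

lemma fderiv_angularIntegral_mul (hw : Continuous w) (hF : DifferentiableOn ℂ F (ball 0 R))
    (hq : q ∈ ball 0 R) (v : ℂ × ℂ) : fderiv ℂ (P.angularIntegral w F) q (v * q) =
      ∫ θ in 0..2 * π, w θ * fderiv ℂ F (P.orbit 0 I q θ) (v * P.orbit 0 I q θ) := by
  have hfderiv := P.continuous_comp_orbit_zero_I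
    (continuousOn_fderiv_of_differentiableOn isOpen_ball hF) hq
  have horbit : Continuous fun θ : ℝ ↦ P.orbit 0 I 1 θ :=
    P.continuous_orbit 0 I continuous_const continuous_ofReal
  have hcont : Continuous fun θ : ℝ ↦ w θ • (fderiv ℂ F (P.orbit 0 I q θ)).comp
      (ContinuousLinearMap.mul ℂ (ℂ × ℂ) (P.orbit 0 I 1 θ)) :=
    hw.smul (hfderiv.clm_comp ((ContinuousLinearMap.mul ℂ (ℂ × ℂ)).continuous.comp horbit))
  rw [(P.hasFDerivAt_angularIntegral hw hF hq).fderiv,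
    ContinuousLinearMap.intervalIntegral_apply (hcont.intervalIntegrable _ _)]
  refine intervalIntegral.integral_congr fun θ _ ↦ ?_
  simp [orbit, mul_left_comm]

lemma derivT_angularIntegral (hw : Continuous w) (hF : DifferentiableOn ℂ F (ball 0 R))
    (hq : q ∈ ball 0 R) :
    P.derivT (P.angularIntegral w F) q = P.angularIntegral w (P.derivT F) q :=
  P.fderiv_angularIntegral_mul hw hF hq _

lemma derivU_angularIntegral (hw : Continuous w) (hF : DifferentiableOn ℂ F (ball 0 R))
    (hq : q ∈ ball 0 R) :
    P.derivU (P.angularIntegral w F) q = P.angularIntegral w (P.derivU F) q :=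
  P.fderiv_angularIntegral_mul hw hF hq _

/-- The mean of `F` over the circles `θ ↦ P.orbit 0 I q θ`. -/
noncomputable def angularMean (F : ℂ × ℂ → ℂ) : ℂ × ℂ → ℂ :=
  P.angularIntegral (fun _ ↦ (2 * π)⁻¹) F

/-- A solution `N` of `u ∂N/∂u = F - P.angularMean F`. -/
noncomputable def angularPrimitive (F : ℂ × ℂ → ℂ) : ℂ × ℂ → ℂ :=
  P.angularIntegral (fun θ ↦ I * (θ - π) / (2 * π)) F

-- Integration by parts: `θ ↦ F (P.orbit 0 I q θ)` is periodic with derivative `I * derivU F`.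
lemma derivU_angularPrimitive (hF : DifferentiableOn ℂ F (ball 0 R)) (hq : q ∈ ball 0 R) :
    P.derivU (P.angularPrimitive F) q = F q - P.angularMean F q := by
  have hcont : Continuous fun θ : ℝ ↦ P.derivU F (P.orbit 0 I q θ) := by
    refine P.continuous_comp_orbit_zero_I ?_ hq
    exact (continuousOn_fderiv_of_differentiableOn isOpen_ball hF).clm_apply (by fun_prop)
  have hderiv : ∀ θ : ℝ, HasDerivAt (fun θ : ℝ ↦ F (P.orbit 0 I q θ))
      (I * P.derivU F (P.orbit 0 I q θ)) θ := fun θ ↦ by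
    simpa using (P.hasDerivAt_comp_orbit (α := 0) (β := I) (hF.differentiableAt
      (isOpen_ball.mem_nhds (P.orbit_zero_I_mem_ball hq θ)))).comp_ofReal
  have hweight : ∀ θ : ℝ, HasDerivAt (fun θ : ℝ ↦ ((θ : ℂ) - π) / (2 * π)) (2 * π)⁻¹ θ := fun θ ↦ by
    simpa using (((hasDerivAt_id (θ : ℂ)).sub_const (π : ℂ)).div_const (2 * π)).comp_ofReal
  have hperiod : P.orbit 0 I q ((2 * π : ℝ) : ℂ) = q := by
    simp [orbit, mul_comm I, exp_two_pi_mul_I]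
  have hparts := intervalIntegral.integral_mul_deriv_eq_deriv_mul (a := 0) (b := 2 * π)
    (fun θ _ ↦ hweight θ) (fun θ _ ↦ hderiv θ) intervalIntegrable_const
    ((hcont.const_mul I).intervalIntegrable _ _)
  rw [angularPrimitive, P.derivU_angularIntegral (by fun_prop) hF hq]
  calc ∫ θ in 0..2 * π, I * (θ - π) / (2 * π) * P.derivU F (P.orbit 0 I q θ)
      = ∫ θ in 0..2 * π, (θ - π) / (2 * π) * (I * P.derivU F (P.orbit 0 I q θ)) :=
        intervalIntegral.integral_congr fun θ _ ↦ by ring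
    _ = F q - P.angularMean F q := by
        rw [hparts, hperiod, angularMean, angularIntegral, ofReal_zero, orbit_zero]
        push_cast
        field_simp
        ring

lemma derivT_angularPrimitive (hF : DifferentiableOn ℂ F (ball 0 R))
    (hT : EqOn (P.derivT F) F (ball 0 R)) (hq : q ∈ ball 0 R) :
    P.derivT (P.angularPrimitive F) q = P.angularPrimitive F q := by
  rw [angularPrimitive, P.derivT_angularIntegral (by fun_prop) hF hq]
  exact intervalIntegral.integral_congr fun θ _ ↦ by
    simp only [hT (P.orbit_zero_I_mem_ball hq θ)]

lemma eqOn_derivT_of_eq_t_mul (hF : DifferentiableOn ℂ F (ball 0 R))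
    (hFf : ∀ q ∈ ball 0 R, q.1 * q.2 ≠ 0 → F q = P.t q * f (P.u q)) :
    EqOn (P.derivT F) F (ball 0 R) := by
  have hcont : ContinuousOn (P.derivT F) (ball 0 R) :=
    (continuousOn_fderiv_of_differentiableOn isOpen_ball hF).clm_apply (by fun_prop)
  refine eqOn_of_forall_mul_ne_zero isOpen_ball hcont hF.continuousOn fun q hq hq₀ ↦ ?_
  have hderiv := P.hasDerivAt_comp_orbit_zero (hF.differentiableAt (isOpen_ball.mem_nhds hq)) 1 0
  have horbit : Tendsto (P.orbit 1 0 q) (𝓝 0) (𝓝 q) := by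
    simpa only [orbit_zero] using (P.hasDerivAt_orbit 1 0 q 0).continuousAt.tendsto
  have hexp : (fun z ↦ F (P.orbit 1 0 q z)) =ᶠ[𝓝 0] fun z ↦ exp z * F q := by
    have hne : ∀ᶠ p : ℂ × ℂ in 𝓝 q, p.1 * p.2 ≠ 0 :=
      (by fun_prop : Continuous fun p : ℂ × ℂ ↦ p.1 * p.2).continuousAt.eventually_ne hq₀
    filter_upwards [horbit.eventually (isOpen_ball.mem_nhds hq), horbit.eventually hne]
      with z hz hz₀
    rw [hFf _ hz hz₀, hFf q hq hq₀, t_orbit, u_orbit, one_mul, zero_mul, Complex.exp_zero, one_mul,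
      mul_assoc]
  simpa using (hderiv.congr_of_eventuallyEq hexp.symm).unique
    ((Complex.hasDerivAt_exp 0).mul_const (F q))

lemma eqOn_angularMean (hF : DifferentiableOn ℂ F (ball 0 R))
    (hFf : ∀ q ∈ ball 0 R, q.1 * q.2 ≠ 0 → F q = P.t q * f (P.u q)) {f₀ : ℂ}
    (hf₀ : ∀ q ∈ ball (0 : ℂ × ℂ) R, q.1 * q.2 ≠ 0 → circleAverage f 0 ‖P.u q‖ = f₀) :
    EqOn (P.angularMean F) (fun q ↦ f₀ * P.t q) (ball 0 R) := by
  have hcont : ContinuousOn (P.angularMean F) (ball 0 R) := fun q hq ↦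
    (P.hasFDerivAt_angularIntegral continuous_const hF hq).continuousAt.continuousWithinAt
  refine eqOn_of_forall_mul_ne_zero isOpen_ball hcont
    (P.differentiable_t.continuous.const_mul f₀).continuousOn fun q hq hq₀ ↦ ?_
  have hcircle : ∀ θ : ℝ, circleMap 0 ‖P.u q‖ (θ + arg (P.u q)) = exp (I * θ) * P.u q := fun θ ↦ by
    conv_rhs => rw [← norm_mul_exp_arg_mul_I (P.u q)]
    rw [circleMap, zero_add, ofReal_add, add_mul, Complex.exp_add, mul_comm I]
    ring
  have hFcircle : ∀ θ : ℝ, F (P.orbit 0 I q θ) =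
      P.t q * f (circleMap 0 ‖P.u q‖ (θ + arg (P.u q))) := fun θ ↦ by
    rw [hFf _ (P.orbit_zero_I_mem_ball hq θ) (P.orbit_fst_mul_snd_ne_zero hq₀), t_orbit, u_orbit,
      zero_mul, Complex.exp_zero, one_mul, hcircle]
  rw [← hf₀ q hq hq₀, circleAverage_eq_integral_add (arg (P.u q)), angularMean, angularIntegral]
  simp only [hFcircle, ← mul_assoc, mul_comm _ (P.t q), intervalIntegral.integral_const_mul,
    real_smul, ofReal_inv, ofReal_mul, ofReal_ofNat]

end UnimodularPair

end AngularAveraging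

section OneVariable

variable {g φ : ℂ → ℂ}

lemma exists_mul_deriv_eq (hφ : AnalyticAt ℂ φ 0) (hφ₀ : φ 0 = 0) :
    ∃ L : ℂ → ℂ, L 0 = 0 ∧ ∀ᶠ u in 𝓝 0, DifferentiableAt ℂ L u ∧ u * deriv L u = φ u := by
  obtain ⟨R, hR, hdiff⟩ := Metric.eventually_nhds_iff_ball.1
    (analyticAt_iff_eventually_differentiableAt.1 hφ)
  have hdslope : DifferentiableOn ℂ (dslope φ 0) (ball 0 R) :=
    (differentiableOn_dslope (ball_mem_nhds 0 hR)).2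
      fun u hu ↦ (hdiff u hu).differentiableWithinAt
  obtain ⟨L, hL₀, hL⟩ := hdslope.isExactOn_ball.with_val_at 0 0
  refine ⟨L, hL₀, ?_⟩
  filter_upwards [ball_mem_nhds 0 hR] with u hu
  refine ⟨(hL u hu).differentiableAt, ?_⟩
  rw [(hL u hu).deriv]
  simpa [hφ₀] using sub_smul_dslope φ 0 u

lemma exists_mul_one_add_mul_deriv_eq (hg : AnalyticAt ℂ g 0) (hg₀ : g 0 ≠ 0) :
    ∃ L : ℂ → ℂ, L 0 = 0 ∧
      ∀ᶠ u in 𝓝 0, DifferentiableAt ℂ L u ∧ g u * (1 + u * deriv L u) = g 0 := by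
  obtain ⟨L, hL₀, hL⟩ := exists_mul_deriv_eq (φ := fun u ↦ g 0 / g u - 1)
    ((analyticAt_const.div hg hg₀).sub analyticAt_const) (by simp [hg₀])
  refine ⟨L, hL₀, ?_⟩
  filter_upwards [hL, hg.continuousAt.eventually_ne hg₀] with u hLu hgu
  refine ⟨hLu.1, ?_⟩
  rw [hLu.2]
  field_simp
  ring

lemma exists_mul_one_add_sq_mul_deriv_eq (hg : AnalyticAt ℂ g 0) (hg₀ : g 0 = 0)
    (hg₁ : deriv g 0 ≠ 0) (hg₂ : iteratedDeriv 2 g 0 = 0) :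
    ∃ L : ℂ → ℂ, ∀ᶠ u in 𝓝 0,
      DifferentiableAt ℂ L u ∧ g u * (1 + u ^ 2 * deriv L u) = deriv g 0 * u := by
  obtain ⟨e, he, htaylor⟩ := hg.exists_eq_sum_add_pow_mul 3
  have hge : ∀ u, g u = u * (deriv g 0 + u ^ 2 * e u) := fun u ↦ by
    simp only [htaylor u, Finset.sum_range_succ, Finset.sum_range_zero, iteratedDeriv_zero,
      iteratedDeriv_one, hg₀, hg₂, smul_eq_mul, Nat.factorial_one, Nat.cast_one, div_one,
      mul_zero, zero_add, add_zero]
    ring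
  have hne : deriv g 0 + 0 ^ 2 * e 0 ≠ 0 := by simpa using hg₁
  have hdenom : AnalyticAt ℂ (fun u ↦ deriv g 0 + u ^ 2 * e u) 0 := by fun_prop
  obtain ⟨L, -, hL⟩ := exists_mul_deriv_eq (φ := fun u ↦ -(u * e u) / (deriv g 0 + u ^ 2 * e u))
    ((analyticAt_id.mul he).neg.div hdenom hne) (by simp)
  refine ⟨L, ?_⟩
  filter_upwards [hL, hdenom.continuousAt.eventually_ne hne] with u hLu hdu
  refine ⟨hLu.1, ?_⟩
  rw [pow_two u, mul_assoc, hLu.2, hge]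
  field_simp
  ring

lemma circleAverage_eq_of_differentiableOn_ball_diff_singleton {E : Type*} [NormedAddCommGroup E]
    [NormedSpace ℂ E] [CompleteSpace E] {f : ℂ → E} {c : ℂ} {ρ s s' : ℝ}
    (hf : DifferentiableOn ℂ f (ball c ρ \ {c})) (hs : s ∈ Ioo 0 ρ) (hs' : s' ∈ Ioo 0 ρ) :
    circleAverage f c s = circleAverage f c s' := by
  wlog hle : s ≤ s' generalizing s s'
  · exact (this hs' hs (le_of_not_ge hle)).symm
  have hmem : closedBall c s' \ ball c s ⊆ ball c ρ \ {c} := fun z hz ↦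
    ⟨closedBall_subset_ball hs'.2 hz.1, fun hzc ↦ hz.2 (hzc ▸ mem_ball_self hs.1)⟩
  rw [circleAverage_eq_circleIntegral hs.1.ne', circleAverage_eq_circleIntegral hs'.1.ne',
    circleIntegral_sub_center_inv_smul_eq_of_differentiable_on_annulus_off_countable hs.1 hle
      countable_empty (hf.continuousOn.mono hmem) fun z hz ↦ hf.differentiableAt <|
      (isOpen_ball.sdiff isClosed_singleton).mem_nhds <|
      hmem ⟨ball_subset_closedBall hz.1.1, fun h ↦ hz.1.2 (ball_subset_closedBall h)⟩]

lemma circleAverage_zero_eq_circleIntegral_div (f : ℂ → ℂ) {s : ℝ} (hs : s ≠ 0) :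
    circleAverage f 0 s = (2 * (π : ℂ) * I)⁻¹ * ∮ z in C(0, s), f z / z := by
  simp only [circleAverage_eq_circleIntegral hs, sub_zero, smul_eq_mul, div_eq_inv_mul]

end OneVariable

section Normalization

namespace UnimodularPair

variable (P : UnimodularPair) {F : ℂ × ℂ → ℂ} {f g L : ℂ → ℂ} {q : ℂ × ℂ} {f₀ ν μ : ℂ}

lemma differentiableAt_t_mul_comp_u (hL : DifferentiableAt ℂ L (P.u q)) :
    DifferentiableAt ℂ (fun q ↦ P.t q * L (P.u q)) q :=
  P.differentiable_t.differentiableAt.mul <|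
    hL.comp q (P.contDiff_u.differentiable one_ne_zero).differentiableAt

lemma smul_derivT_add_smul_derivU_t_mul_comp_u (hL : DifferentiableAt ℂ L (P.u q)) (α β : ℂ) :
    α • P.derivT (fun q ↦ P.t q * L (P.u q)) q + β • P.derivU (fun q ↦ P.t q * L (P.u q)) q =
      α * (P.t q * L (P.u q)) + β * (P.t q * (P.u q * deriv L (P.u q))) := by
  have hexp : HasDerivAt (fun z ↦ exp (α * z)) α 0 := by
    simpa using ((hasDerivAt_id (0 : ℂ)).const_mul α).cexp
  have horbit : HasDerivAt (fun z ↦ P.t (P.orbit α β q z) * L (P.u (P.orbit α β q z)))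
      (α * P.t q * L (P.u q) + P.t q * (deriv L (P.u q) * (β * P.u q))) 0 := by
    simpa [t_orbit] using (hexp.mul_const (P.t q)).fun_mul (P.hasDerivAt_comp_u_orbit_zero hL α β)
  rw [(P.hasDerivAt_comp_orbit_zero (P.differentiableAt_t_mul_comp_u hL) α β).unique horbit]
  ring

lemma derivT_t_mul_comp_u (hL : DifferentiableAt ℂ L (P.u q)) :
    P.derivT (fun q ↦ P.t q * L (P.u q)) q = P.t q * L (P.u q) := by
  simpa using P.smul_derivT_add_smul_derivU_t_mul_comp_u hL 1 0

lemma derivU_t_mul_comp_u (hL : DifferentiableAt ℂ L (P.u q)) :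
    P.derivU (fun q ↦ P.t q * L (P.u q)) q = P.t q * (P.u q * deriv L (P.u q)) := by
  simpa using P.smul_derivT_add_smul_derivU_t_mul_comp_u hL 0 1

lemma exists_derivT_eq_self_and_derivU_eq (hF : ∀ᶠ q in 𝓝 0, DifferentiableAt ℂ F q)
    (hFf : ∀ᶠ q in 𝓝 0, q.1 * q.2 ≠ 0 → F q = P.t q * f (P.u q))
    (hf₀ : ∀ᶠ u : ℂ in 𝓝[≠] 0, circleAverage f 0 ‖u‖ = f₀)
    (hL : ∀ᶠ u in 𝓝 0, DifferentiableAt ℂ L u) :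
    ∃ N : ℂ × ℂ → ℂ, ∀ᶠ q in 𝓝 0, DifferentiableAt ℂ N q ∧ P.derivT N q = N q ∧
      P.derivU N q = F q - f₀ * P.t q * (1 + P.u q * deriv L (P.u q)) := by
  have hf₀u : ∀ᶠ q in 𝓝 0, q.1 * q.2 ≠ 0 → circleAverage f 0 ‖P.u q‖ = f₀ := by
    filter_upwards [P.tendsto_u.eventually (eventually_nhdsWithin_iff.1 hf₀)] with q hq hq₀
      using hq (P.u_ne_zero hq₀)
  obtain ⟨R, hR, hball⟩ := Metric.eventually_nhds_iff_ball.1 ((hF.and hFf).and hf₀u)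
  have hFd : DifferentiableOn ℂ F (ball 0 R) := fun q hq ↦
    (hball q hq).1.1.differentiableWithinAt
  have hFfR : ∀ q ∈ ball 0 R, q.1 * q.2 ≠ 0 → F q = P.t q * f (P.u q) := fun q hq ↦
    (hball q hq).1.2
  set M : ℂ × ℂ → ℂ := fun q ↦ P.t q * L (P.u q)
  refine ⟨fun q ↦ P.angularPrimitive F q - f₀ * M q, ?_⟩
  filter_upwards [ball_mem_nhds 0 hR, P.tendsto_u.eventually hL] with q hq hLq
  have hprim : DifferentiableAt ℂ (P.angularPrimitive F) q :=
    (P.hasFDerivAt_angularIntegral (by fun_prop) hFd hq).differentiableAt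
  have hM := P.differentiableAt_t_mul_comp_u hLq
  have hfderiv (v : ℂ × ℂ) : fderiv ℂ (fun q ↦ P.angularPrimitive F q - f₀ * M q) q v =
      fderiv ℂ (P.angularPrimitive F) q v - f₀ * fderiv ℂ M q v := by
    rw [(hprim.hasFDerivAt.fun_sub (hM.hasFDerivAt.const_mul f₀)).fderiv]
    rfl
  refine ⟨hprim.sub (hM.const_mul f₀), (hfderiv _).trans ?_, (hfderiv _).trans ?_⟩
  · change P.derivT _ q - f₀ * P.derivT M q = _
    rw [P.derivT_angularPrimitive hFd (P.eqOn_derivT_of_eq_t_mul hFd hFfR) hq,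
      P.derivT_t_mul_comp_u hLq]
  · change P.derivU _ q - f₀ * P.derivU M q = _
    rw [P.derivU_angularPrimitive hFd hq, P.derivU_t_mul_comp_u hLq,
      P.eqOn_angularMean hFd hFfR (fun q hq ↦ (hball q hq).2) hq]
    ring

lemma eventually_exists_isMaxLocalC2Action_ball_of_flowDenominator {h k : ℂ → ℂ} {d : ℂ → ℂ → ℂ}
    {c : ℂ} (l ν : ℂ) (hμ : μ ≠ 0) (hF : ∀ᶠ q in 𝓝 0, DifferentiableAt ℂ F q)
    (hFf : ∀ᶠ q in 𝓝 0, q.1 * q.2 ≠ 0 → F q = P.t q * f (P.u q))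
    (hf₀ : ∀ᶠ u : ℂ in 𝓝[≠] 0, circleAverage f 0 ‖u‖ = f₀)
    (hL : ∀ᶠ u in 𝓝 0, DifferentiableAt ℂ L u)
    (hLc : ∀ᶠ u in 𝓝 0, f₀ * (g u * (1 + u * deriv L u)) = c) (hd : IsFlowDenominator h d)
    (hk : ContDiffAt ℂ 1 k 0) (hk₀ : k 0 = 1)
    (hβ : ∀ᶠ u in 𝓝 0, μ * g u * (k u + u * deriv k u) = k u * h (u * k u)) :
    ∀ᶠ ε in 𝓝[>] (0 : ℝ), ∃ W Φ, IsMaxLocalC2Action (ball 0 ε) (fun q ↦ P.field (l * P.t q) 0 q)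
      (fun q ↦ P.field (ν * g (P.u q) * F q) (μ * g (P.u q)) q) W Φ := by
  obtain ⟨N, hN⟩ := P.exists_derivT_eq_self_and_derivU_eq hF hFf hf₀ hL
  have hfderiv : ∀ᶠ q in 𝓝 0, ∀ v,
      fderiv ℂ (fun q ↦ ν / μ * N q) q v = ν / μ * fderiv ℂ N q v := by
    filter_upwards [hN] with q hq v
    rw [(hq.1.hasFDerivAt.const_mul (ν / μ)).fderiv]
    rfl
  refine P.eventually_exists_isMaxLocalC2Action_ball (N := fun q ↦ ν / μ * N q) (c := ν * c)
    (β := fun u ↦ μ * g u) l hd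
    (contDiffAt_one_of_eventually_differentiableAt (hN.mono fun q hq ↦ hq.1.const_mul _))
    hk hk₀ ?_ ?_ hβ
  · filter_upwards [hN, hfderiv] with q hq hfderivq
    rw [derivT, hfderivq, ← derivT, hq.2.1]
  · filter_upwards [hN, hfderiv, P.tendsto_u.eventually hLc] with q hq hfderivq hLq
    rw [derivU, hfderivq, ← derivU, hq.2.2, ← hLq]
    field_simp
    ring

lemma eventually_exists_isMaxLocalC2Action_ball_of_ne_zero (l ν : ℂ) (hμ : μ ≠ 0)
    (hF : ∀ᶠ q in 𝓝 0, DifferentiableAt ℂ F q)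
    (hFf : ∀ᶠ q in 𝓝 0, q.1 * q.2 ≠ 0 → F q = P.t q * f (P.u q))
    (hf₀ : ∀ᶠ u : ℂ in 𝓝[≠] 0, circleAverage f 0 ‖u‖ = f₀) (hg : AnalyticAt ℂ g 0) (hg₀ : g 0 ≠ 0) :
    ∀ᶠ ε in 𝓝[>] (0 : ℝ), ∃ W Φ, IsMaxLocalC2Action (ball 0 ε) (fun q ↦ P.field (l * P.t q) 0 q)
      (fun q ↦ P.field (ν * g (P.u q) * F q) (μ * g (P.u q)) q) W Φ := by
  obtain ⟨L, hL₀, hL⟩ := exists_mul_one_add_mul_deriv_eq hg hg₀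
  have hLd := hL.mono fun _ hu ↦ hu.1
  refine P.eventually_exists_isMaxLocalC2Action_ball_of_flowDenominator (k := fun u ↦ exp (L u))
    (c := f₀ * g 0) l ν hμ hF hFf hf₀ hLd (hL.mono fun u hu ↦ by rw [hu.2])
    (isFlowDenominator_exp (μ * g 0))
    (contDiffAt_one_of_eventually_differentiableAt hLd).cexp (by simp [hL₀]) ?_
  filter_upwards [hL] with u hu
  rw [hu.1.hasDerivAt.cexp.deriv, ← hu.2]
  ring

lemma eventually_exists_isMaxLocalC2Action_ball_of_deriv_ne_zero (l ν : ℂ) (hμ : μ ≠ 0)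
    (hF : ∀ᶠ q in 𝓝 0, DifferentiableAt ℂ F q)
    (hFf : ∀ᶠ q in 𝓝 0, q.1 * q.2 ≠ 0 → F q = P.t q * f (P.u q))
    (hf₀ : ∀ᶠ u : ℂ in 𝓝[≠] 0, circleAverage f 0 ‖u‖ = 0) (hg : AnalyticAt ℂ g 0) (hg₀ : g 0 = 0)
    (hg₁ : deriv g 0 ≠ 0) (hg₂ : iteratedDeriv 2 g 0 = 0) :
    ∀ᶠ ε in 𝓝[>] (0 : ℝ), ∃ W Φ, IsMaxLocalC2Action (ball 0 ε) (fun q ↦ P.field (l * P.t q) 0 q)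
      (fun q ↦ P.field (ν * g (P.u q) * F q) (μ * g (P.u q)) q) W Φ := by
  obtain ⟨L, hL⟩ := exists_mul_one_add_sq_mul_deriv_eq hg hg₀ hg₁ hg₂
  have hdenom : ContDiffAt ℂ 1 (fun u ↦ 1 - u * L u) 0 := contDiffAt_const.sub <|
    contDiffAt_id.mul (contDiffAt_one_of_eventually_differentiableAt (hL.mono fun _ hu ↦ hu.1))
  -- The coordinate `v = u * k u` satisfies `1 / v = 1 / u - L u`.
  refine P.eventually_exists_isMaxLocalC2Action_ball_of_flowDenominator
    (L := 0) (k := fun u ↦ (1 - u * L u)⁻¹) (c := 0) l ν hμ hF hFf hf₀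
    (.of_forall fun _ ↦ differentiableAt_const 0) (.of_forall fun _ ↦ zero_mul _)
    (isFlowDenominator_one_sub (μ * deriv g 0)) (hdenom.inv (by simp)) (by simp) ?_
  filter_upwards [hL, hdenom.continuousAt.eventually_ne (by simp : 1 - 0 * L 0 ≠ 0)] with u hu hu₀
  have hderiv : HasDerivAt (fun u ↦ (1 - u * L u)⁻¹)
      ((L u + u * deriv L u) / (1 - u * L u) ^ 2) u := by
    simpa using (((hasDerivAt_id u).fun_mul hu.1.hasDerivAt).const_sub 1).fun_inv hu₀
  rw [hderiv.deriv]
  field_simp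
  linear_combination hu.2

end UnimodularPair

end Normalization

lemma setOf_norm_lt_eq_ball (r : ℝ) :
    {q : ℂ × ℂ | ‖q.1‖ < r ∧ ‖q.2‖ < r} = ball 0 r := by
  ext q
  simp [Prod.norm_def]

theorem univalent_on_small_polydisc_general
    (a b m n : ℕ) (hm : 0 < m)
    (hab : (a * m : ℤ) - (b * n : ℤ) = 1 ∨ (a * m : ℤ) - (b * n : ℤ) = -1)
    (ρ : ℝ) (hρ : 0 < ρ) (g f : ℂ → ℂ)
    (hg : DifferentiableOn ℂ g (ball (0 : ℂ) ρ))
    (hf : DifferentiableOn ℂ f (ball (0 : ℂ) ρ \ {0}))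
    (r : ℝ) (hr : 0 < r) (F : ℂ × ℂ → ℂ)
    (hF : DifferentiableOn ℂ F {q : ℂ × ℂ | ‖q.1‖ < r ∧ ‖q.2‖ < r})
    (hFf : ∀ q ∈ {q : ℂ × ℂ | ‖q.1‖ < r ∧ ‖q.2‖ < r}, q.1 * q.2 ≠ 0 →
      F q = q.1 ^ a * q.2 ^ b * f (q.1 ^ n * q.2 ^ m))
    (X Y : ℂ × ℂ → ℂ × ℂ)
    (hX : ∀ q : ℂ × ℂ, X q =
      (q.1 ^ a * q.2 ^ b * ((m : ℂ) * q.1), q.1 ^ a * q.2 ^ b * (-(n : ℂ) * q.2)))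
    (hY : ∀ q : ℂ × ℂ, Y q =
      (g (q.1 ^ n * q.2 ^ m) * (q.1 * (-((b : ℂ) * m) + F q)),
       g (q.1 ^ n * q.2 ^ m) * (q.2 * ((a : ℂ) * m - ((n : ℂ) / (m : ℂ)) * F q))))
    (hcond : g 0 ≠ 0 ∨
      (g 0 = 0 ∧ iteratedDeriv 2 g 0 = 0 ∧
        (∀ s : ℝ, 0 < s → s < ρ →
          (2 * (π : ℂ) * I)⁻¹ * (∮ z in C(0, s), f z / z) = 0) ∧
        deriv g 0 ≠ 0)) :
    ∀ᶠ ε in 𝓝[>] (0 : ℝ), ∃ W Φ,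
      IsMaxLocalC2Action {q : ℂ × ℂ | ‖q.1‖ < ε ∧ ‖q.2‖ < ε} X Y W Φ := by
  let P : UnimodularPair := ⟨a, b, n, m, by rcases hab with h | h <;> rw [h] <;> rfl⟩
  have hm₀ : (m : ℂ) ≠ 0 := Nat.cast_ne_zero.2 hm.ne'
  have hX' : X = fun q ↦ P.field (P.det * P.t q) 0 q :=
    funext fun q ↦ (hX q).trans (P.field_det_mul_t q).symm
  have hY' : Y = fun q ↦ P.field (P.det / P.m * g (P.u q) * F q) (P.det * P.m * g (P.u q)) q :=
    funext fun q ↦ (hY q).trans (P.field_det_div_mul hm₀ _ _ q).symm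
  have hμ : (P.det * P.m : ℂ) ≠ 0 := mul_ne_zero (left_ne_zero_of_mul_eq_one P.det_mul_det) hm₀
  have hball : ∀ᶠ q : ℂ × ℂ in 𝓝 0, q ∈ {q : ℂ × ℂ | ‖q.1‖ < r ∧ ‖q.2‖ < r} := by
    rw [setOf_norm_lt_eq_ball]
    exact ball_mem_nhds 0 hr
  have hF' := hF.eventually_differentiableAt hball
  have hFf' := hball.mono hFf
  have hg' : AnalyticAt ℂ g 0 := hg.analyticAt (ball_mem_nhds 0 hρ)
  have hsmall : ∀ᶠ u : ℂ in 𝓝[≠] 0, ‖u‖ ∈ Ioo 0 ρ :=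
    tendsto_norm_nhdsNE_zero.eventually (Ioo_mem_nhdsGT hρ)
  simp only [hX', hY', setOf_norm_lt_eq_ball]
  rcases hcond with hg₀ | ⟨hg₀, hg₂, hf₀, hg₁⟩
  · exact P.eventually_exists_isMaxLocalC2Action_ball_of_ne_zero _ _ hμ hF' hFf'
      (hsmall.mono fun _ hu ↦ circleAverage_eq_of_differentiableOn_ball_diff_singleton hf hu
        ⟨half_pos hρ, half_lt_self hρ⟩) hg' hg₀
  · exact P.eventually_exists_isMaxLocalC2Action_ball_of_deriv_ne_zero _ _ hμ hF' hFf'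
      (hsmall.mono fun _ hu ↦ (circleAverage_zero_eq_circleIntegral_div f hu.1.ne').trans
        (hf₀ _ hu.1 hu.2)) hg' hg₀ hg₁ hg₂

/-- **Proposition 3.1.**
Under one of the conditions (1) `g(0) ≠ 0`, or (2) `g(0) = g''(0) = f₀ = 0` and
`g'(0) ≠ 0` (where `f₀` is the constant Laurent coefficient of `f` at `0`), the abelian
Lie algebra generated by the commuting pair `X`, `Y` of the family (1.1) is univalent on a
sufficiently small polydisc around the origin: `X` and `Y` generate a maximal local
`ℂ²`-action on `B_ε` for some `ε ∈ (0, r)`. -/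
theorem univalent_on_small_polydisc
    (a b m n : ℕ) (ha : 0 < a) (hb : 0 < b) (hm : 0 < m) (hn : 0 < n)
    (hab : (a * m : ℤ) - (b * n : ℤ) = 1 ∨ (a * m : ℤ) - (b * n : ℤ) = -1)
    (ρ : ℝ) (hρ : 0 < ρ) (g f : ℂ → ℂ)
    (hg : DifferentiableOn ℂ g (ball (0 : ℂ) ρ))
    (hf : DifferentiableOn ℂ f (ball (0 : ℂ) ρ \ {0}))
    (r : ℝ) (hr : 0 < r) (hrρ : r ^ (n + m) < ρ)
    (F : ℂ × ℂ → ℂ)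
    (hF : DifferentiableOn ℂ F {q : ℂ × ℂ | ‖q.1‖ < r ∧ ‖q.2‖ < r})
    (hFf : ∀ q ∈ {q : ℂ × ℂ | ‖q.1‖ < r ∧ ‖q.2‖ < r}, q.1 * q.2 ≠ 0 →
      F q = q.1 ^ a * q.2 ^ b * f (q.1 ^ n * q.2 ^ m))
    (hF0 : F (0, 0) = 0) (hdF0 : fderiv ℂ F (0, 0) = 0)
    (X Y : ℂ × ℂ → ℂ × ℂ)
    (hX : ∀ q : ℂ × ℂ, X q =
      (q.1 ^ a * q.2 ^ b * ((m : ℂ) * q.1), q.1 ^ a * q.2 ^ b * (-(n : ℂ) * q.2)))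
    (hY : ∀ q : ℂ × ℂ, Y q =
      (g (q.1 ^ n * q.2 ^ m) * (q.1 * (-((b : ℂ) * m) + F q)),
       g (q.1 ^ n * q.2 ^ m) * (q.2 * ((a : ℂ) * m - ((n : ℂ) / (m : ℂ)) * F q))))
    (hcond : g 0 ≠ 0 ∨
      (g 0 = 0 ∧ iteratedDeriv 2 g 0 = 0 ∧
        (∀ s : ℝ, 0 < s → s < ρ →
          (2 * (π : ℂ) * I)⁻¹ * (∮ z in C(0, s), f z / z) = 0) ∧
        deriv g 0 ≠ 0)) :
    ∃ ε : ℝ, 0 < ε ∧ ε < r ∧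
      ∃ (W : Set ((ℂ × ℂ) × (ℂ × ℂ))) (Φ : (ℂ × ℂ) × (ℂ × ℂ) → ℂ × ℂ),
        IsMaxLocalC2Action {q : ℂ × ℂ | ‖q.1‖ < ε ∧ ‖q.2‖ < ε} X Y W Φ := by
  obtain ⟨ε, ⟨W, Φ, hΦ⟩, hε⟩ := ((univalent_on_small_polydisc_general a b m n hm hab ρ hρ g f hg hf
    r hr F hF hFf X Y hX hY hcond).and (Ioo_mem_nhdsGT hr)).exists
  exact ⟨ε, hε.1, hε.2, W, Φ, hΦ⟩
end

section
/- Let E be a finite-dimensional complex normed space, Ω ⊆ E an open set, and Z : Ω → E a holomorphic vector field. Assume that the real flow of Z is complete, i.e. for every p ∈ Ω there exists a differentiable curve γ : ℝ → Ω with γ(0) = p and γ'(t) = Z(γ(t)) for all t ∈ ℝ. Then Z is semicomplete on Ω: for every p ∈ Ω there exist a connected open set V ⊆ ℂ with 0 ∈ V and a holomorphic map φ : V → Ω such that φ(0) = p, φ'(T) = Z(φ(T)) for all T ∈ V, and such that for every compact set K ⊆ Ω and every sequence (Tᵢ) in V converging to a point of the frontier of V in ℂ, φ(Tᵢ) ∉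 K for all sufficiently large i. -/
open Set Filter

/-- A holomorphic vector field `Z` is semicomplete on `Ω`: each point admits a maximal
integral curve, defined on a connected open subset of `ℂ` containing `0`, which leaves
every compact subset of `Ω` along any sequence of times converging to the frontier of its
domain. -/
def Semicomplete {E : Type*} [NormedAddCommGroup E] [NormedSpace ℂ E]
    (Ω : Set E) (Z : E → E) : Prop :=
  ∀ p ∈ Ω, ∃ (V : Set ℂ) (φ : ℂ → E), IsOpen V ∧ IsConnected V ∧ (0 : ℂ) ∈ V ∧
    (∀ T ∈ V, φ T ∈ Ω) ∧ φ 0 = p ∧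
    (∀ T ∈ V, HasDerivWithinAt φ (Z (φ T)) V T) ∧
    ∀ K ⊆ Ω, IsCompact K → ∀ T : ℕ → ℂ, (∀ i, T i ∈ V) →
      ∀ Tl ∈ frontier V, Tendsto T atTop (nhds Tl) →
      ∀ᶠ i in atTop, φ (T i) ∉ K

/-!
Let `χ` be the maximal solution on an interval `J` of `χ' = i Z(χ)` with `χ 0 = p`, that is, the
integral curve through `p` in imaginary time. Moving it along the complete real flow `Γ` gives
`φ (t + is) = Γ (χ s) t` on the horizontal strip `{T | Im T ∈ J}`.

This `φ` is holomorphic because real and imaginary time flows commute. Near a point of the strip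
compare `φ` with a local holomorphic solution: if `s ↦ Γ (χ s) t` is an imaginary-time curve, then
uniqueness first along the vertical and then along the horizontal lines identifies the two. The
size of the discs on which local solutions exist is locally uniform, so this property of `t`
spreads from `t = 0` to all of `ℝ`.

Suppose `φ` returned to a compact set `K` along times `Tᵢ` tending to the frontier. The imaginary
solutions through `φ Tᵢ` would live for a uniform time `r`; flowing them back by real time
`- Re Tᵢ` extends `χ` to an interval of radius `r` around `Im Tᵢ`, hence beyond the end of `J`.
-/

open Metric Topology Complex
open scoped NNReal

-- Continuous differentiability is not known beforehand in infinite dimensions, so the Lipschitz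
-- constant comes from the Schwarz lemma on balls of radius `ε / 2`.
theorem locallyLipschitzOn_of_differentiableOn {E F : Type*} [NormedAddCommGroup E]
    [NormedSpace ℂ E] [NormedAddCommGroup F] [NormedSpace ℂ F] {Ω : Set E} (hΩ : IsOpen Ω)
    {f : E → F} (hf : DifferentiableOn ℂ f Ω) : LocallyLipschitzOn Ω f := by
  intro x hx
  have hnear : ∀ᶠ y in 𝓝 x, y ∈ Ω ∧ dist (f y) (f x) < 1 :=
    (hΩ.eventually_mem hx).and
      ((hf.differentiableAt (hΩ.mem_nhds hx)).continuousAt (ball_mem_nhds _ one_pos))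
  obtain ⟨ε, hε, hball⟩ := eventually_nhds_iff_ball.1 hnear
  refine ⟨(2 / (ε / 2)).toNNReal, ball x (ε / 4),
    mem_nhdsWithin_of_mem_nhds (ball_mem_nhds _ (by positivity)), ?_⟩
  refine LipschitzOnWith.of_dist_le' fun y hy z hz => ?_
  have hsub : ball z (ε / 2) ⊆ ball x ε := ball_subset_ball' (by linarith [mem_ball.1 hz])
  have hmaps : MapsTo f (ball z (ε / 2)) (closedBall (f z) 2) := fun w hw => by
    have hw' := (hball w (hsub hw)).2
    have hz' := (hball z (hsub (mem_ball_self (by positivity)))).2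
    exact mem_closedBall.2 (by linarith [dist_triangle_right (f w) (f z) (f x)])
  refine dist_le_div_mul_dist_of_mapsTo_ball (hf.mono fun w hw => (hball w (hsub hw)).1) hmaps ?_
  exact mem_ball.2 (by linarith [dist_triangle_right y z x, mem_ball.1 hy, mem_ball.1 hz])

theorem exists_tendstoUniformlyOn_of_le_geometric {α X : Type*} [PseudoMetricSpace X]
    [CompleteSpace X] {F : ℕ → α → X} {s : Set α} {C κ : ℝ} (hκ₀ : 0 ≤ κ) (hκ : κ < 1)
    (hF : ∀ n, ∀ x ∈ s, dist (F n x) (F (n + 1) x) ≤ C * κ ^ n) :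
    ∃ f, TendstoUniformlyOn F f atTop s := by
  have hlim : ∀ x, ∃ y, x ∈ s → Tendsto (F · x) atTop (𝓝 y) := fun x => by
    by_cases hx : x ∈ s
    · have hcauchy := cauchySeq_of_le_geometric κ C hκ fun n => hF n x hx
      exact (cauchySeq_tendsto_of_complete hcauchy).imp fun _ h _ => h
    · exact ⟨F 0 x, fun h => absurd h hx⟩
  choose f hf using hlim
  have hzero : Tendsto (fun n => C * κ ^ n / (1 - κ)) atTop (𝓝 0) := by
    simpa using ((tendsto_pow_atTop_nhds_zero_of_lt_one hκ₀ hκ).const_mul C).div_const (1 - κ)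
  refine ⟨f, Metric.tendstoUniformlyOn_iff.2 fun ε hε => ?_⟩
  filter_upwards [hzero.eventually_lt_const hε] with n hn x hx
  rw [dist_comm]
  exact (dist_le_of_le_geometric_of_tendsto κ C hκ (fun n => hF n x hx) (hf x hx) n).trans_lt hn

section Picard

variable {E : Type*} [NormedAddCommGroup E] [NormedSpace ℂ E] {Z : E → E} {p : E}
  {T₀ : ℂ} {a r : ℝ}

theorem exists_picard_step [CompleteSpace E] {M : ℝ} (hZ : DifferentiableOn ℂ Z (closedBall p a))
    (hM : ∀ x ∈ closedBall p a, ‖Z x‖ ≤ M) (hMr : M * r ≤ a) {f : ℂ → E}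
    (hf : DifferentiableOn ℂ f (ball T₀ r)) (hmaps : MapsTo f (ball T₀ r) (closedBall p a)) :
    ∃ g : ℂ → E, g T₀ = p ∧ MapsTo g (ball T₀ r) (closedBall p a) ∧
      ∀ T ∈ ball T₀ r, HasDerivAt g (Z (f T)) T := by
  obtain ⟨g, hg₀, hg⟩ := (hZ.comp hf hmaps).isExactOn_ball.with_val_at T₀ p
  refine ⟨g, hg₀, fun T hT => ?_, hg⟩
  have hbound := (convex_ball T₀ r).norm_image_sub_le_of_norm_hasDerivWithin_le
    (fun T hT => (hg T hT).hasDerivWithinAt) (fun T hT => hM _ (hmaps hT))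
    (mem_ball_self (pos_of_mem_ball hT)) hT
  have hM₀ : 0 ≤ M := (norm_nonneg _).trans (hM _ (hmaps hT))
  rw [mem_closedBall_iff_norm, ← hg₀]
  calc ‖g T - g T₀‖ ≤ M * ‖T - T₀‖ := hbound
    _ ≤ M * r := by gcongr; exact (mem_ball_iff_norm.1 hT).le
    _ ≤ a := hMr

theorem dist_picard_step_le {K : ℝ≥0} {s : Set E} (hZ : LipschitzOnWith K Z s)
    {f₁ f₂ g₁ g₂ : ℂ → E} (hf₁ : MapsTo f₁ (ball T₀ r) s) (hf₂ : MapsTo f₂ (ball T₀ r) s)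
    (hg₁ : ∀ T ∈ ball T₀ r, HasDerivAt g₁ (Z (f₁ T)) T)
    (hg₂ : ∀ T ∈ ball T₀ r, HasDerivAt g₂ (Z (f₂ T)) T) (h₀ : g₁ T₀ = g₂ T₀) {C : ℝ}
    (hC : ∀ T ∈ ball T₀ r, dist (f₁ T) (f₂ T) ≤ C) :
    ∀ T ∈ ball T₀ r, dist (g₁ T) (g₂ T) ≤ K * r * C := by
  intro T hT
  have hderiv : ∀ T ∈ ball T₀ r, ‖Z (f₁ T) - Z (f₂ T)‖ ≤ K * C := fun T hT => by
    rw [← dist_eq_norm]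
    exact (hZ.dist_le_mul _ (hf₁ hT) _ (hf₂ hT)).trans (by gcongr; exact hC T hT)
  have hbound := (convex_ball T₀ r).norm_image_sub_le_of_norm_hasDerivWithin_le
    (fun T hT => ((hg₁ T hT).sub (hg₂ T hT)).hasDerivWithinAt) hderiv
    (mem_ball_self (pos_of_mem_ball hT)) hT
  have hC₀ : 0 ≤ C := dist_nonneg.trans (hC T hT)
  calc dist (g₁ T) (g₂ T) = ‖(g₁ - g₂) T - (g₁ - g₂) T₀‖ := by simp [h₀, dist_eq_norm]
    _ ≤ K * C * ‖T - T₀‖ := hbound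
    _ ≤ K * C * r := by gcongr; exact (mem_ball_iff_norm.1 hT).le
    _ = K * r * C := by ring

theorem exists_picard_sequence [CompleteSpace E] {M : ℝ} (ha : 0 ≤ a)
    (hZ : DifferentiableOn ℂ Z (closedBall p a)) (hM : ∀ x ∈ closedBall p a, ‖Z x‖ ≤ M)
    (hMr : M * r ≤ a) (T₀ : ℂ) :
    ∃ F : ℕ → ℂ → E, (∀ n, F n T₀ = p) ∧ (∀ n, MapsTo (F n) (ball T₀ r) (closedBall p a)) ∧
      ∀ n, ∀ T ∈ ball T₀ r, HasDerivAt (F (n + 1)) (Z (F n T)) T := by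
  let A := {f : ℂ → E // f T₀ = p ∧ MapsTo f (ball T₀ r) (closedBall p a) ∧
    DifferentiableOn ℂ f (ball T₀ r)}
  have hstep : ∀ f : A, ∃ g : A, ∀ T ∈ ball T₀ r, HasDerivAt g.1 (Z (f.1 T)) T := by
    rintro ⟨f, -, hmaps, hf⟩
    obtain ⟨g, hg₀, hgmaps, hg⟩ := exists_picard_step hZ hM hMr hf hmaps
    exact ⟨⟨g, hg₀, hgmaps, fun T hT => (hg T hT).differentiableAt.differentiableWithinAt⟩, hg⟩
  choose next hnext using hstep
  let start : A := ⟨fun _ => p, rfl, fun _ _ => mem_closedBall_self ha, differentiableOn_const p⟩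
  refine ⟨fun n => (next^[n] start).1, fun n => (next^[n] start).2.1,
    fun n => (next^[n] start).2.2.1, fun n => ?_⟩
  simp only [Function.iterate_succ_apply']
  exact hnext _

theorem exists_hasDerivAt_of_lipschitzOnWith_closedBall [CompleteSpace E] {M : ℝ} {K : ℝ≥0}
    (ha : 0 ≤ a) (hr : 0 < r) (hZ : DifferentiableOn ℂ Z (closedBall p a))
    (hM : ∀ x ∈ closedBall p a, ‖Z x‖ ≤ M) (hK : LipschitzOnWith K Z (closedBall p a))
    (hMr : M * r ≤ a) (hKr : K * r < 1) (T₀ : ℂ) :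
    ∃ f : ℂ → E, f T₀ = p ∧ MapsTo f (ball T₀ r) (closedBall p a) ∧
      ∀ T ∈ ball T₀ r, HasDerivAt f (Z (f T)) T := by
  obtain ⟨F, hF₀, hFmaps, hF⟩ := exists_picard_sequence ha hZ hM hMr T₀
  have hdist : ∀ n, ∀ T ∈ ball T₀ r, dist (F n T) (F (n + 1) T) ≤ 2 * a * (K * r) ^ n := by
    intro n
    induction n with
    | zero =>
      intro T hT
      linarith [dist_triangle_right (F 0 T) (F 1 T) p, mem_closedBall.1 (hFmaps 0 hT),
        mem_closedBall.1 (hFmaps 1 hT)]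
    | succ n ih =>
      intro T hT
      refine (dist_picard_step_le hK (hFmaps n) (hFmaps (n + 1)) (hF n) (hF (n + 1))
        ((hF₀ _).trans (hF₀ _).symm) ih T hT).trans_eq ?_
      ring
  obtain ⟨f, hf⟩ := exists_tendstoUniformlyOn_of_le_geometric (by positivity) hKr hdist
  have hfmaps : MapsTo f (ball T₀ r) (closedBall p a) := fun T hT =>
    isClosed_closedBall.mem_of_tendsto (hf.tendsto_at hT) (.of_forall fun n => hFmaps n hT)
  have hZF : TendstoLocallyUniformlyOn (fun n => Z ∘ F n) (Z ∘ f) atTop (ball T₀ r) :=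
    UniformContinuousOn.comp_tendstoLocallyUniformlyOn hK.uniformContinuousOn
      hf.tendstoLocallyUniformlyOn hfmaps (.of_forall hFmaps)
  refine ⟨f, ?_, hfmaps, fun T hT => ?_⟩
  · have hlim := hf.tendsto_at (mem_ball_self hr)
    simp only [hF₀] at hlim
    exact tendsto_nhds_unique hlim tendsto_const_nhds
  · exact hasDerivAt_of_tendstoLocallyUniformlyOn isOpen_ball hZF (.of_forall hF)
      (fun T hT => (hf.tendsto_at hT).comp (tendsto_add_atTop_nat 1)) hT

end Picard

section RealTime

variable {E : Type*} [NormedAddCommGroup E] [NormedSpace ℝ E]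

/-- `γ` is an integral curve in `Ω` of the autonomous vector field `v`, parametrized by the open
interval `I`. Outside `I` the function `γ` is arbitrary, and `I` may be empty. -/
structure IsIntegralArc (γ : ℝ → E) (v : E → E) (I : Set ℝ) (Ω : Set E) : Prop where
  isOpen : IsOpen I
  isPreconnected : IsPreconnected I
  mapsTo : MapsTo γ I Ω
  hasDerivAt : ∀ t ∈ I, HasDerivAt γ (v (γ t)) t

/-- An integral arc which no integral arc through one of its points extends. -/
structure IsMaximalIntegralArc (γ : ℝ → E) (v : E → E) (I : Set ℝ) (Ω : Set E) : Prop
    extends IsIntegralArc γ v I Ω where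
  subset_of_eq : ∀ ⦃η : ℝ → E⦄ ⦃I' : Set ℝ⦄ ⦃t : ℝ⦄, IsIntegralArc η v I' Ω →
    t ∈ I → t ∈ I' → η t = γ t → I' ⊆ I

/-- `Γ q t` is the time-`t` flow of `v` in `Ω` started at `q`, complete in real time. -/
structure IsGlobalFlow (Γ : E → ℝ → E) (v : E → E) (Ω : Set E) : Prop where
  isIntegralArc : ∀ q ∈ Ω, IsIntegralArc (Γ q) v univ Ω
  apply_zero : ∀ q ∈ Ω, Γ q 0 = q

variable {v : E → E} {Ω : Set E}

theorem isIntegralCurveAt_of_eventuallyEq {v : ℝ → E → E} {γ η : ℝ → E} {t₀ : ℝ}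
    (hγ : IsIntegralCurveAt γ v t₀) (h : η =ᶠ[𝓝 t₀] γ) : IsIntegralCurveAt η v t₀ := by
  filter_upwards [hγ, h.eventually_nhds] with t ht hηγ
  rw [hηγ.self_of_nhds]
  exact ht.congr_of_eventuallyEq hηγ

theorem eventuallyEq_of_isIntegralCurveAt (hΩ : IsOpen Ω) (hv : LocallyLipschitzOn Ω v)
    {γ η : ℝ → E} {t₀ : ℝ} (hγ : IsIntegralCurveAt γ (fun _ => v) t₀)
    (hη : IsIntegralCurveAt η (fun _ => v) t₀) (hmem : γ t₀ ∈ Ω) (heq : γ t₀ = η t₀) :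
    γ =ᶠ[𝓝 t₀] η := by
  obtain ⟨K, s, hs, hK⟩ := hv hmem
  rw [hΩ.nhdsWithin_eq hmem] at hs
  exact ODE_solution_unique_of_eventually (.of_forall fun _ => hK)
    (hγ.and (hγ.continuousAt hs)) (hη.and (hη.continuousAt (heq ▸ hs))) heq

namespace IsIntegralArc

variable {γ η : ℝ → E} {I J : Set ℝ} {t₀ : ℝ}

theorem mono (hγ : IsIntegralArc γ v I Ω) (hJ : IsOpen J) (hJ' : IsPreconnected J)
    (hJI : J ⊆ I) : IsIntegralArc γ v J Ω :=
  ⟨hJ, hJ', hγ.mapsTo.mono_left hJI, fun t ht => hγ.hasDerivAt t (hJI ht)⟩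

theorem isIntegralCurveAt (hγ : IsIntegralArc γ v I Ω) (ht₀ : t₀ ∈ I) :
    IsIntegralCurveAt γ (fun _ => v) t₀ :=
  mem_of_superset (hγ.isOpen.mem_nhds ht₀) hγ.hasDerivAt

theorem eqOn_inter (hΩ : IsOpen Ω) (hv : LocallyLipschitzOn Ω v) (hγ : IsIntegralArc γ v I Ω)
    (hη : IsIntegralArc η v J Ω) (ht₀ : t₀ ∈ I ∩ J) (heq : γ t₀ = η t₀) : EqOn γ η (I ∩ J) := by
  have hIJ : IsPreconnected (I ∩ J) :=
    (hγ.isPreconnected.ordConnected.inter hη.isPreconnected.ordConnected).isPreconnected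
  have hlocal : ∀ t ∈ I ∩ J, γ t = η t → γ =ᶠ[𝓝 t] η := fun t ht =>
    eventuallyEq_of_isIntegralCurveAt hΩ hv (hγ.isIntegralCurveAt ht.1)
      (hη.isIntegralCurveAt ht.2) (hγ.mapsTo ht.1)
  have hsub : I ∩ J ⊆ {t | γ =ᶠ[𝓝 t] η} := by
    refine hIJ.subset_of_closure_inter_subset isOpen_setOfPred_eventually_nhds
      ⟨t₀, ht₀, hlocal t₀ ht₀ heq⟩ ?_
    rintro t ⟨hclosure, ht⟩
    refine hlocal t ht (by_contra fun hne => ?_)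
    have hne' := ((hγ.hasDerivAt t ht.1).continuousAt.ne_iff_eventually_ne
      (hη.hasDerivAt t ht.2).continuousAt).1 hne
    obtain ⟨u, hu, hu'⟩ := ((mem_closure_iff_frequently.1 hclosure).and_eventually hne').exists
    exact hu' hu.eq_of_nhds
  exact fun t ht => (hsub ht).eq_of_nhds

theorem exists_iUnion (hΩ : IsOpen Ω) (hv : LocallyLipschitzOn Ω v) {ι : Type*}
    {γ : ι → ℝ → E} {I : ι → Set ℝ} {p : E} (hγ : ∀ i, IsIntegralArc (γ i) v (I i) Ω)
    (ht₀ : ∀ i, t₀ ∈ I i) (hp : ∀ i, γ i t₀ = p) :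
    ∃ χ, (∀ i, EqOn χ (γ i) (I i)) ∧ IsIntegralArc χ v (⋃ i, I i) Ω := by
  have hglue : ∀ t, ∃ x, ∀ i, t ∈ I i → x = γ i t := fun t => by
    by_cases ht : ∃ i, t ∈ I i
    · obtain ⟨i, hi⟩ := ht
      exact ⟨γ i t, fun j hj => eqOn_inter hΩ hv (hγ i) (hγ j) ⟨ht₀ i, ht₀ j⟩
        ((hp i).trans (hp j).symm) ⟨hi, hj⟩⟩
    · exact ⟨p, fun i hi => absurd ⟨i, hi⟩ ht⟩
  choose χ hχ using hglue
  have hEqOn : ∀ i, EqOn χ (γ i) (I i) := fun i t ht => hχ t i ht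
  refine ⟨χ, hEqOn, isOpen_iUnion fun i => (hγ i).isOpen,
    isPreconnected_iUnion ⟨t₀, mem_iInter.2 ht₀⟩ fun i => (hγ i).isPreconnected, ?_, ?_⟩
  · exact mapsTo_iUnion.2 fun i => (hγ i).mapsTo.congr (hEqOn i).symm
  · intro t ht
    obtain ⟨i, hi⟩ := mem_iUnion.1 ht
    rw [hEqOn i hi]
    exact ((hγ i).hasDerivAt t hi).congr_of_eventuallyEq
      ((hEqOn i).eventuallyEq_of_mem ((hγ i).isOpen.mem_nhds hi))

theorem exists_union (hΩ : IsOpen Ω) (hv : LocallyLipschitzOn Ω v) (hγ : IsIntegralArc γ v I Ω)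
    (hη : IsIntegralArc η v J Ω) (htI : t₀ ∈ I) (htJ : t₀ ∈ J) (heq : η t₀ = γ t₀) :
    ∃ χ, EqOn χ γ I ∧ IsIntegralArc χ v (I ∪ J) Ω := by
  obtain ⟨χ, hχ, hχ'⟩ := exists_iUnion (γ := fun b => cond b γ η) (I := fun b => cond b I J)
    hΩ hv (Bool.forall_bool.2 ⟨hη, hγ⟩) (Bool.forall_bool.2 ⟨htJ, htI⟩)
    (Bool.forall_bool.2 ⟨heq, rfl⟩)
  exact ⟨χ, hχ true, by rwa [union_eq_iUnion]⟩

theorem exists_maximal (hΩ : IsOpen Ω) (hv : LocallyLipschitzOn Ω v)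
    (hγ : IsIntegralArc γ v I Ω) (ht₀ : t₀ ∈ I) :
    ∃ χ J, t₀ ∈ J ∧ χ t₀ = γ t₀ ∧ IsMaximalIntegralArc χ v J Ω := by
  let A := {a : (ℝ → E) × Set ℝ // IsIntegralArc a.1 v a.2 Ω ∧ t₀ ∈ a.2 ∧ a.1 t₀ = γ t₀}
  obtain ⟨χ, hχ, hχ'⟩ := exists_iUnion (γ := fun a : A => a.1.1) (I := fun a : A => a.1.2)
    hΩ hv (fun a => a.2.1) (fun a => a.2.2.1) (fun a => a.2.2.2)
  have ht₀' : t₀ ∈ ⋃ a : A, a.1.2 := mem_iUnion_of_mem ⟨(γ, I), hγ, ht₀, rfl⟩ ht₀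
  have hχ₀ : χ t₀ = γ t₀ := hχ ⟨(γ, I), hγ, ht₀, rfl⟩ ht₀
  refine ⟨χ, ⋃ a : A, a.1.2, ht₀', hχ₀, hχ', fun η I' t hη ht ht' heq => ?_⟩
  obtain ⟨ξ, hξ, hξ'⟩ := exists_union hΩ hv hχ' hη ht ht' heq
  exact subset_union_right.trans (subset_iUnion (fun a : A => a.1.2)
    ⟨(ξ, _), hξ', Or.inl ht₀', (hξ ht₀').trans hχ₀⟩)

end IsIntegralArc

theorem exists_isGlobalFlow (hγ : ∀ q ∈ Ω, ∃ γ : ℝ → E, (∀ t, γ t ∈ Ω) ∧ γ 0 = q ∧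
    ∀ t, HasDerivAt γ (v (γ t)) t) : ∃ Γ, IsGlobalFlow Γ v Ω := by
  choose! Γ hmem hzero hderiv using hγ
  exact ⟨Γ, fun q hq => ⟨isOpen_univ, isPreconnected_univ, fun t _ => hmem q hq t,
    fun t _ => hderiv q hq t⟩, hzero⟩

theorem IsGlobalFlow.apply_apply (hΩ : IsOpen Ω) (hv : LocallyLipschitzOn Ω v)
    {Γ : E → ℝ → E} (hΓ : IsGlobalFlow Γ v Ω) {q : E} (hq : q ∈ Ω) (t u : ℝ) :
    Γ (Γ q t) u = Γ q (u + t) := by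
  have harc := hΓ.isIntegralArc q hq
  have hmem : Γ q t ∈ Ω := harc.mapsTo (mem_univ t)
  have hshift : IsIntegralArc (fun u => Γ q (u + t)) v univ Ω :=
    ⟨isOpen_univ, isPreconnected_univ, fun u _ => harc.mapsTo (mem_univ _),
      fun u _ => (harc.hasDerivAt _ (mem_univ _)).comp_add_const u t⟩
  exact (hΓ.isIntegralArc _ hmem).eqOn_inter hΩ hv hshift ⟨mem_univ 0, mem_univ 0⟩
    (by simp only [hΓ.apply_zero _ hmem, zero_add]) ⟨mem_univ u, mem_univ u⟩

end RealTime

section ComplexTime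

variable {E : Type*} [NormedAddCommGroup E] [NormedSpace ℂ E] {Z : E → E} {Ω : Set E}

/-- `f` is a holomorphic integral curve of `Z` in `Ω`, parametrized by the set `V` of complex
times. -/
structure IsComplexIntegralCurveOn (f : ℂ → E) (Z : E → E) (V : Set ℂ) (Ω : Set E) : Prop where
  mapsTo : MapsTo f V Ω
  hasDerivAt : ∀ T ∈ V, HasDerivAt f (Z (f T)) T

theorem IsComplexIntegralCurveOn.comp_line {f : ℂ → E} {V : Set ℂ}
    (hf : IsComplexIntegralCurveOn f Z V Ω) (hV : IsOpen V) (hV' : Convex ℝ V) (T₀ c : ℂ) :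
    IsIntegralArc (fun t : ℝ => f (T₀ + t * c)) (c • Z) ((fun t : ℝ => T₀ + t * c) ⁻¹' V) Ω where
  isOpen := hV.preimage (by fun_prop)
  isPreconnected := by
    simpa only [preimage_preimage, LinearMap.toSpanSingleton_apply, real_smul] using
      ((hV'.translate_preimage_right T₀).linear_preimage
        (LinearMap.toSpanSingleton ℝ ℂ c)).isPreconnected
  mapsTo _ ht := hf.mapsTo ht
  hasDerivAt t ht := by
    have hline : HasDerivAt (fun t : ℝ => T₀ + t * c) c t := by
      simpa using (ofRealCLM.hasDerivAt.mul_const c).const_add T₀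
    exact (hf.hasDerivAt _ ht).scomp t hline

theorem exists_radius_isComplexIntegralCurveOn_ball [CompleteSpace E] (hΩ : IsOpen Ω)
    (hZ : DifferentiableOn ℂ Z Ω) {q : E} (hq : q ∈ Ω) :
    ∃ r > 0, ∀ᶠ p in 𝓝 q, ∀ T₀ : ℂ, ∃ f : ℂ → E, f T₀ = p ∧
      IsComplexIntegralCurveOn f Z (ball T₀ r) Ω := by
  obtain ⟨K, s, hs, hK⟩ := locallyLipschitzOn_of_differentiableOn hΩ hZ hq
  rw [hΩ.nhdsWithin_eq hq] at hs
  have hbound : ∀ᶠ x in 𝓝 q, ‖Z x‖ < ‖Z q‖ + 1 :=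
    (hZ.differentiableAt (hΩ.mem_nhds hq)).continuousAt.norm.eventually_lt_const (lt_add_one _)
  obtain ⟨ε, hε, hball⟩ := eventually_nhds_iff_ball.1 (hbound.and (inter_mem hs (hΩ.mem_nhds hq)))
  have hsmall : ∀ᶠ r : ℝ in 𝓝[>] 0, (‖Z q‖ + 1) * r < ε / 3 ∧ K * r < 1 := by
    refine nhdsWithin_le_nhds (Filter.Eventually.and ?_ ?_) <;>
    exact (Continuous.tendsto' (by fun_prop) 0 0 (mul_zero _)).eventually_lt_const (by positivity)
  obtain ⟨r, ⟨hMr, hKr⟩, hr⟩ := (hsmall.and self_mem_nhdsWithin).exists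
  refine ⟨r, hr, ?_⟩
  filter_upwards [ball_mem_nhds q (half_pos hε)] with p hp T₀
  have hsub : closedBall p (ε / 3) ⊆ ball q ε :=
    closedBall_subset_ball' (by linarith [mem_ball.1 hp])
  obtain ⟨f, hf₀, hmaps, hf⟩ := exists_hasDerivAt_of_lipschitzOnWith_closedBall
    (a := ε / 3) (by positivity) hr (hZ.mono fun x hx => (hball x (hsub hx)).2.2)
    (fun x hx => (hball x (hsub hx)).1.le) (hK.mono fun x hx => (hball x (hsub hx)).2.1)
    hMr.le hKr T₀
  exact ⟨f, hf₀, fun T hT => (hball _ (hsub (hmaps hT))).2.2, hf⟩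

/-- The map `t + is ↦ Γ (χ s) t` obtained by moving the curve `χ`, read as a curve in imaginary
time, along the real-time flow `Γ`. -/
def sweep (Γ : E → ℝ → E) (χ : ℝ → E) (T : ℂ) : E := Γ (χ T.im) T.re

variable {Γ : E → ℝ → E} {χ : ℝ → E} {J : Set ℝ}

theorem sweep_eventuallyEq_of_isIntegralCurveAt (hΩ : IsOpen Ω) (hZ : DifferentiableOn ℂ Z Ω)
    (hΓ : IsGlobalFlow Γ Z Ω) (hχ : IsIntegralArc χ (I • Z) J Ω) {f : ℂ → E} {b T : ℂ} {r : ℝ}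
    (hf : IsComplexIntegralCurveOn f Z (ball b r) Ω) (hfb : f b = sweep Γ χ b) (hb : b.im ∈ J)
    (hT : T ∈ ball b r) (him : T.im = b.im)
    (hvert : IsIntegralCurveAt (fun s => Γ (χ s) b.re) (fun _ => I • Z) b.im) :
    sweep Γ χ =ᶠ[𝓝 T] f := by
  have hline := hf.comp_line isOpen_ball (convex_ball b r) b.re I
  have hbline : b.im ∈ (fun s : ℝ => (b.re : ℂ) + s * I) ⁻¹' ball b r := by
    simpa [re_add_im] using mem_ball_self (x := b) (pos_of_mem_ball hT)
  have hvertEq : ∀ᶠ s in 𝓝 b.im, Γ (χ s) b.re = f (b.re + s * I) := by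
    refine eventuallyEq_of_isIntegralCurveAt hΩ
      (locallyLipschitzOn_of_differentiableOn hΩ (hZ.const_smul I)) hvert
      (hline.isIntegralCurveAt hbline) ?_ ?_
    · exact (hΓ.isIntegralArc _ (hχ.mapsTo hb)).mapsTo (mem_univ _)
    · simp only [re_add_im, hfb, sweep]
  have hnear := (hχ.isOpen.eventually_mem hb).and
    (hvertEq.and (hline.isOpen.eventually_mem hbline))
  filter_upwards [(continuous_im.tendsto' T b.im him).eventually hnear,
    isOpen_ball.mem_nhds hT] with w ⟨hwJ, hweq, hwball⟩ hw
  have hhor := hf.comp_line isOpen_ball (convex_ball b r) (w.im * I) 1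
  rw [one_smul] at hhor
  have hEqOn := (hΓ.isIntegralArc _ (hχ.mapsTo hwJ)).eqOn_inter hΩ
    (locallyLipschitzOn_of_differentiableOn hΩ hZ) hhor (t₀ := b.re)
    ⟨mem_univ _, by simpa [add_comm] using hwball⟩ (by simpa [add_comm] using hweq)
  simpa [add_comm, sweep] using hEqOn ⟨mem_univ w.re, by simpa [add_comm] using hw⟩

theorem isIntegralCurveAt_of_sweep_eventuallyEq {f : ℂ → E} {b T : ℂ} {r : ℝ}
    (hf : IsComplexIntegralCurveOn f Z (ball b r) Ω) (hT : T ∈ ball b r)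
    (heq : sweep Γ χ =ᶠ[𝓝 T] f) :
    IsIntegralCurveAt (fun s => Γ (χ s) T.re) (fun _ => I • Z) T.im := by
  have hline := hf.comp_line isOpen_ball (convex_ball b r) T.re I
  have hTline : T.im ∈ (fun s : ℝ => (T.re : ℂ) + s * I) ⁻¹' ball b r := by
    simpa [re_add_im] using hT
  have htendsto : Tendsto (fun s : ℝ => (T.re : ℂ) + s * I) (𝓝 T.im) (𝓝 T) :=
    Continuous.tendsto' (by fun_prop) _ _ (re_add_im T)
  refine isIntegralCurveAt_of_eventuallyEq (hline.isIntegralCurveAt hTline) ?_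
  filter_upwards [htendsto.eventually heq] with s hs
  simpa [sweep] using hs

theorem isIntegralCurveAt_flow [CompleteSpace E] (hΩ : IsOpen Ω) (hZ : DifferentiableOn ℂ Z Ω)
    (hΓ : IsGlobalFlow Γ Z Ω) (hχ : IsIntegralArc χ (I • Z) J Ω) {s₀ : ℝ} (hs₀ : s₀ ∈ J)
    (t : ℝ) : IsIntegralCurveAt (fun s => Γ (χ s) t) (fun _ => I • Z) s₀ := by
  have harc := hΓ.isIntegralArc _ (hχ.mapsTo hs₀)
  let P (x : ℝ) : Prop := IsIntegralCurveAt (fun s => Γ (χ s) x) (fun _ => I • Z) s₀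
  have hzero : P 0 := isIntegralCurveAt_of_eventuallyEq (hχ.isIntegralCurveAt hs₀) <| by
    filter_upwards [hχ.isOpen.mem_nhds hs₀] with s hs using hΓ.apply_zero _ (hχ.mapsTo hs)
  suffices hlocal : ∀ x, ∀ᶠ y in 𝓝 x, (P x → P y) ∧ (P y → P x) from
    PreconnectedSpace.induction₂' (fun x y => P x → P y) hlocal
      ⟨fun _ _ _ hxy hyz => hyz ∘ hxy⟩ 0 t hzero
  intro x
  obtain ⟨r, hr, hsol⟩ :=
    exists_radius_isComplexIntegralCurveOn_ball hΩ hZ (harc.mapsTo (mem_univ x))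
  have hstep : ∀ y z : ℝ, dist z y < r → (∀ T₀ : ℂ, ∃ f, f T₀ = Γ (χ s₀) y ∧
      IsComplexIntegralCurveOn f Z (ball T₀ r) Ω) → P y → P z := by
    intro y z hzy hy hPy
    obtain ⟨f, hfy, hf⟩ := hy ⟨y, s₀⟩
    have hz : (⟨z, s₀⟩ : ℂ) ∈ ball ⟨y, s₀⟩ r := by
      simpa [dist_of_im_eq] using hzy
    exact isIntegralCurveAt_of_sweep_eventuallyEq hf hz
      (sweep_eventuallyEq_of_isIntegralCurveAt hΩ hZ hΓ hχ hf hfy hs₀ hz rfl hPy)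
  have hcont := (harc.hasDerivAt x (mem_univ x)).continuousAt
  filter_upwards [hcont.eventually hsol, ball_mem_nhds x hr] with y hy hyx
  exact ⟨hstep x y hyx hsol.self_of_nhds, hstep y x (mem_ball'.1 hyx) hy⟩

theorem IsIntegralArc.comp_flow [CompleteSpace E] (hΩ : IsOpen Ω) (hZ : DifferentiableOn ℂ Z Ω)
    (hΓ : IsGlobalFlow Γ Z Ω) (hχ : IsIntegralArc χ (I • Z) J Ω) (t : ℝ) :
    IsIntegralArc (fun s => Γ (χ s) t) (I • Z) J Ω where
  isOpen := hχ.isOpen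
  isPreconnected := hχ.isPreconnected
  mapsTo _ hs := (hΓ.isIntegralArc _ (hχ.mapsTo hs)).mapsTo (mem_univ t)
  hasDerivAt _ hs := (isIntegralCurveAt_flow hΩ hZ hΓ hχ hs t).hasDerivAt

theorem IsIntegralArc.isComplexIntegralCurveOn_sweep [CompleteSpace E] (hΩ : IsOpen Ω)
    (hZ : DifferentiableOn ℂ Z Ω) (hΓ : IsGlobalFlow Γ Z Ω) (hχ : IsIntegralArc χ (I • Z) J Ω) :
    IsComplexIntegralCurveOn (sweep Γ χ) Z (im ⁻¹' J) Ω := by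
  have hmaps : MapsTo (sweep Γ χ) (im ⁻¹' J) Ω := fun T hT =>
    (hΓ.isIntegralArc _ (hχ.mapsTo hT)).mapsTo (mem_univ T.re)
  refine ⟨hmaps, fun T hT => ?_⟩
  obtain ⟨r, hr, hsol⟩ := exists_radius_isComplexIntegralCurveOn_ball hΩ hZ (hmaps hT)
  obtain ⟨f, hfT, hf⟩ := hsol.self_of_nhds T
  have heq := sweep_eventuallyEq_of_isIntegralCurveAt hΩ hZ hΓ hχ hf hfT hT (mem_ball_self hr) rfl
    (isIntegralCurveAt_flow hΩ hZ hΓ hχ hT T.re)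
  rw [← hfT]
  exact (hf.hasDerivAt T (mem_ball_self hr)).congr_of_eventuallyEq heq

theorem IsMaximalIntegralArc.ball_im_subset [CompleteSpace E] (hΩ : IsOpen Ω)
    (hZ : DifferentiableOn ℂ Z Ω) (hΓ : IsGlobalFlow Γ Z Ω)
    (hχ : IsMaximalIntegralArc χ (I • Z) J Ω) {f : ℂ → E} {T : ℂ} {r : ℝ} (hr : 0 < r)
    (hT : T.im ∈ J) (hf : IsComplexIntegralCurveOn f Z (ball T r) Ω) (hfT : f T = sweep Γ χ T) :
    ball T.im r ⊆ J := by
  have hsub : ball T.im r ⊆ (fun s : ℝ => (T.re : ℂ) + s * I) ⁻¹' ball T r := fun s hs => by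
    rw [mem_preimage, mem_ball, dist_of_re_eq (by simp)]
    simpa using hs
  have hvert : IsIntegralArc (fun s : ℝ => f (T.re + s * I)) (I • Z) (ball T.im r) Ω :=
    (hf.comp_line isOpen_ball (convex_ball T r) T.re I).mono isOpen_ball
      (convex_ball _ _).isPreconnected hsub
  refine hχ.subset_of_eq (hvert.comp_flow hΩ hZ hΓ (-T.re)) hT (mem_ball_self hr) ?_
  have hmem : χ T.im ∈ Ω := hχ.mapsTo hT
  simp only [re_add_im, hfT, sweep]
  rw [hΓ.apply_apply hΩ (locallyLipschitzOn_of_differentiableOn hΩ hZ) hmem, neg_add_cancel,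
    hΓ.apply_zero _ hmem]

theorem IsMaximalIntegralArc.eventually_sweep_notMem [CompleteSpace E] (hΩ : IsOpen Ω)
    (hZ : DifferentiableOn ℂ Z Ω) (hΓ : IsGlobalFlow Γ Z Ω)
    (hχ : IsMaximalIntegralArc χ (I • Z) J Ω) {K : Set E} (hKΩ : K ⊆ Ω) (hK : IsCompact K)
    {ι : Type*} {l : Filter ι} {T : ι → ℂ} {T' : ℂ} (hT : ∀ i, (T i).im ∈ J)
    (hlim : Tendsto T l (𝓝 T')) (hT' : T'.im ∉ J) : ∀ᶠ i in l, sweep Γ χ (T i) ∉ K := by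
  by_contra hfreq
  simp only [not_eventually, not_not] at hfreq
  obtain ⟨k, hkK, hk⟩ := hK.exists_mapClusterPt_of_frequently hfreq
  obtain ⟨r, hr, hsol⟩ := exists_radius_isComplexIntegralCurveOn_ball hΩ hZ (hKΩ hkK)
  have him : ∀ᶠ i in l, T'.im ∈ ball (T i).im r := by
    filter_upwards [((continuous_im.tendsto T').comp hlim).eventually (ball_mem_nhds _ hr)]
      with i hi using mem_ball'.1 hi
  obtain ⟨i, hi, hi'⟩ := ((mapClusterPt_iff_frequently.1 hk _ hsol).and_eventually him).exists
  obtain ⟨f, hfT, hf⟩ := hi (T i)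
  exact hT' (hχ.ball_im_subset hΩ hZ hΓ hr (hT i) hf hfT hi')

theorem exists_isIntegralArc [CompleteSpace E] (hΩ : IsOpen Ω) (hZ : DifferentiableOn ℂ Z Ω)
    {p : E} (hp : p ∈ Ω) (c : ℂ) (t₀ : ℝ) :
    ∃ γ I, t₀ ∈ I ∧ γ t₀ = p ∧ IsIntegralArc γ (c • Z) I Ω := by
  obtain ⟨r, hr, hsol⟩ := exists_radius_isComplexIntegralCurveOn_ball hΩ hZ hp
  obtain ⟨f, hfp, hf⟩ := hsol.self_of_nhds (t₀ * c)
  exact ⟨_, _, by simpa using hr, by simpa using hfp,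
    hf.comp_line isOpen_ball (convex_ball _ r) 0 c⟩

theorem exists_isMaximalIntegralArc [CompleteSpace E] (hΩ : IsOpen Ω)
    (hZ : DifferentiableOn ℂ Z Ω) {p : E} (hp : p ∈ Ω) (c : ℂ) (t₀ : ℝ) :
    ∃ χ J, t₀ ∈ J ∧ χ t₀ = p ∧ IsMaximalIntegralArc χ (c • Z) J Ω := by
  obtain ⟨γ, I, ht₀, hγp, hγ⟩ := exists_isIntegralArc hΩ hZ hp c t₀
  obtain ⟨χ, J, ht₀', hχ, hmax⟩ := hγ.exists_maximal hΩ
    (locallyLipschitzOn_of_differentiableOn hΩ (hZ.const_smul c)) ht₀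
  exact ⟨χ, J, ht₀', hχ.trans hγp, hmax⟩

theorem real_complete_implies_semicomplete_general [CompleteSpace E] (hΩ : IsOpen Ω)
    (hZ : DifferentiableOn ℂ Z Ω)
    (hreal : ∀ p ∈ Ω, ∃ γ : ℝ → E, (∀ t : ℝ, γ t ∈ Ω) ∧ γ 0 = p ∧
      ∀ t : ℝ, HasDerivAt γ (Z (γ t)) t) :
    Semicomplete Ω Z := by
  obtain ⟨Γ, hΓ⟩ := exists_isGlobalFlow hreal
  intro p hp
  obtain ⟨χ, J, hzero, hχp, hχ⟩ := exists_isMaximalIntegralArc hΩ hZ hp I 0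
  have hsweep := hχ.isComplexIntegralCurveOn_sweep hΩ hZ hΓ
  have hopen : IsOpen (im ⁻¹' J) := hχ.isOpen.preimage continuous_im
  have hconvex : Convex ℝ (im ⁻¹' J) :=
    hχ.isPreconnected.ordConnected.convex.linear_preimage imLm
  refine ⟨im ⁻¹' J, sweep Γ χ, hopen, ⟨⟨0, hzero⟩, hconvex.isPreconnected⟩, hzero,
    hsweep.mapsTo, ?_, fun T hT => (hsweep.hasDerivAt T hT).hasDerivWithinAt, ?_⟩
  · simp only [sweep, zero_im, zero_re, hχp, hΓ.apply_zero p hp]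
  · intro K hKΩ hK T hT T' hT' hlim
    rw [hopen.frontier_eq] at hT'
    exact hχ.eventually_sweep_notMem hΩ hZ hΓ hKΩ hK hT hlim hT'.2

end ComplexTime

/-- **Corollary C, item (ii).**
If the real flow of a holomorphic vector field `Z` on an open subset `Ω` of a
finite-dimensional complex normed space is complete — every point lies on an integral
curve `γ : ℝ → Ω` of `Z` defined for all real times — then `Z` is semicomplete on `Ω`. -/
theorem real_complete_implies_semicomplete
    {E : Type*} [NormedAddCommGroup E] [NormedSpace ℂ E] [FiniteDimensional ℂ E]
    (Ω : Set E) (hΩ : IsOpen Ω) (Z : E → E)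
    (hZ : DifferentiableOn ℂ Z Ω)
    (hreal : ∀ p ∈ Ω, ∃ γ : ℝ → E, (∀ t : ℝ, γ t ∈ Ω) ∧ γ 0 = p ∧
      ∀ t : ℝ, HasDerivAt γ (Z (γ t)) t) :
    Semicomplete Ω Z := by
  have := FiniteDimensional.complete ℂ E
  exact real_complete_implies_semicomplete_general hΩ hZ hreal
end

section
/- Let a, b, m, n be positive integers with a·m − b·n ∈ {−1, 1}. Let ρ > 0, let g be holomorphic and nowhere vanishing on D(0,ρ) \ {0} ⊆ ℂ (g may vanish at 0), and let f be holomorphic on D(0,ρ) \ {0} with z ↦ z^r·f(z) extending holomorphically to D(0,ρ) for some nonnegative integer r. Fix r' > 0 with (r')^(n+m) < ρ and set U* = {(x,y) ∈ ℂ² : 0 < |x| < r', 0 < |y| < r'}. On N = ℂ² × U* ⊆ ℂ⁴ define the vector fields X̄(t,s,x,y) = (1, 0, x^a·y^b·m·x, −x^a·y^b·n·y) and Ȳ(t,s,x,y) = (0, 1, g(x^n·y^m)·x·(−b·m + x^a·y^b·f(x^n·y^m)), g(x^n·y^m)·y·(a·m − (n/m)·x^a·y^b·f(x^n·y^m))).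 Let ~ be the leaf equivalence relation on N determined (over ℂ) by X̄ and Ȳ. Then the quotient topological space N/~ is Hausdorff. -/
open Set Metric

/-- One step of Palais' leaf relation over `ℂ`: `p` and `q` are joined by a differentiable
path in `N` whose velocity at each time lies in the `ℂ`-linear span of the values of the
given vector fields.  The leaf equivalence relation is the smallest equivalence relation
containing this relation, and the leaf space is the quotient `Quot` with the quotient
topology. -/
def LeafStepC {E : Type*} [NormedAddCommGroup E] [NormedSpace ℂ E]
    (N : Set E) (Vs : Set (E → E)) (p q : ↥N) : Prop :=
  ∃ γ : ℝ → E, (∀ k ∈ Icc (0:ℝ) 1, γ k ∈ N) ∧ γ 0 = (p : E) ∧ γ 1 = (q : E) ∧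
    ∀ k ∈ Icc (0:ℝ) 1, ∃ d ∈ Submodule.span ℂ ((fun V => V (γ k)) '' Vs),
      HasDerivWithinAt γ d (Icc (0:ℝ) 1) k

/-!
Pull the foliation back to the universal cover `(t, s, ξ, η) ↦ (t, s, e^ξ, e^η)`. With
`z = x ^ n * y ^ m = e^(nξ + mη)` and a primitive `P` of the holomorphic function
`ζ ↦ (f / m ^ 2, -1 / ((am - bn) m g))(e^ζ)` on the half-plane `|e^ζ| < ρ`, the map
`H = (x ^ (-a) * y ^ (-b) + (am - bn) t, s) + P (nξ + mη)` is a first integral upstairs, and each of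
its fibres is a graph over the convex set of admissible `(ξ, η)`, hence a single leaf. Deck
transformations translate `H` by multiples of `gcd(n, m) κ`, where `κ` is the period of `P`, so the
leaf space injects continuously into the Hausdorff group `ℂ² / ⟨gcd(n, m) κ⟩`.
-/

section General

theorem t2Space_quot_of_isQuotientMap {X Y Z : Type*} [TopologicalSpace X] [TopologicalSpace Y]
    [TopologicalSpace Z] [T2Space Y] {π : Z → X} (hπ : Topology.IsQuotientMap π) {f : Z → Y}
    (hf : Continuous f) {rel : X → X → Prop} (hrel : ∀ u v, rel (π u) (π v) ↔ f u = f v) :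
    T2Space (Quot rel) := by
  have hπf : Function.FactorsThrough f π := fun u v huv ↦
    (hrel u v).1 (huv ▸ (hrel u u).2 rfl)
  let F : C(X, Y) := Topology.IsQuotientMap.lift (f := ⟨π, hπ.continuous⟩) hπ ⟨f, hf⟩ hπf
  have hF (u : Z) : F (π u) = f u :=
    DFunLike.congr_fun (Topology.IsQuotientMap.lift_comp (f := ⟨π, hπ.continuous⟩) hπ ⟨f, hf⟩ hπf) u
  have hFrel (p q : X) : rel p q ↔ F p = F q := by
    obtain ⟨u, rfl⟩ := hπ.surjective p
    obtain ⟨v, rfl⟩ := hπ.surjective q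
    rw [hrel, hF, hF]
  refine .of_injective_continuous (f := Quot.lift F fun p q ↦ (hFrel p q).1) ?_
    (continuous_quot_lift _ F.continuous)
  rintro ⟨p⟩ ⟨q⟩ h
  exact Quot.sound ((hFrel p q).2 h)

theorem mem_zmultiples_gcd_nsmul_iff {G : Type*} [AddCommGroup G] {n m : ℕ} {κ w : G} :
    w ∈ AddSubgroup.zmultiples (n.gcd m • κ) ↔ ∃ j l : ℤ, w = (n * j + m * l) • κ := by
  rw [AddSubgroup.mem_zmultiples_iff]
  constructor
  · rintro ⟨k, rfl⟩
    refine ⟨n.gcdA m * k, n.gcdB m * k, ?_⟩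
    rw [← natCast_zsmul, smul_smul, Nat.gcd_eq_gcd_ab]
    congr 1
    ring
  · rintro ⟨j, l, rfl⟩
    obtain ⟨k, hk⟩ : (n.gcd m : ℤ) ∣ n * j + m * l :=
      dvd_add (dvd_mul_of_dvd_left (mod_cast n.gcd_dvd_left m) _)
        (dvd_mul_of_dvd_left (mod_cast n.gcd_dvd_right m) _)
    exact ⟨k, by rw [hk, mul_comm, mul_smul, natCast_zsmul]⟩

theorem exists_add_int_mul_eq_add_zsmul {𝕜 E : Type*} [RCLike 𝕜] [NormedAddCommGroup E]
    [NormedSpace 𝕜 E] {s : Set 𝕜} (hs : IsOpen s) (hs' : IsPreconnected s) {φ P : 𝕜 → E}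
    (hP : ∀ z ∈ s, HasDerivAt P (φ z) z) {c : 𝕜} (hsc : ∀ z, z + c ∈ s ↔ z ∈ s)
    (hφ : Function.Periodic φ c) : ∃ κ : E, ∀ z ∈ s, ∀ j : ℤ, P (z + j * c) = P z + j • κ := by
  have hPc (z : 𝕜) (hz : z ∈ s) : HasDerivAt (fun w ↦ P (w + c)) (φ z) z :=
    hφ z ▸ (hP _ ((hsc z).2 hz)).comp_add_const z c
  obtain ⟨κ, hκ⟩ := hs.exists_eq_add_of_deriv_eq hs'
    (fun z hz ↦ (hPc z hz).differentiableAt.differentiableWithinAt)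
    (fun z hz ↦ (hP z hz).differentiableAt.differentiableWithinAt)
    (fun z hz ↦ (hPc z hz).deriv.trans (hP z hz).deriv.symm)
  have hmem (z : 𝕜) (hz : z ∈ s) (j : ℤ) : z + j * c ∈ s := by
    induction j with
    | zero => simpa using hz
    | succ i ih => rwa [Int.cast_add, Int.cast_one, add_one_mul, ← add_assoc, hsc]
    | pred i ih => rwa [← hsc, Int.cast_sub, Int.cast_one, sub_mul, one_mul, ← add_sub_assoc,
        sub_add_cancel]
  have hstep (z : 𝕜) (hz : z ∈ s) (j : ℤ) : P (z + (j + 1 : ℤ) * c) = P (z + j * c) + κ := by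
    rw [Int.cast_add, Int.cast_one, add_one_mul, ← add_assoc]
    exact hκ (hmem z hz j)
  refine ⟨κ, fun z hz j ↦ ?_⟩
  induction j with
  | zero => simp
  | succ i ih => rw [hstep z hz, ih, add_smul, one_smul, add_assoc]
  | pred i ih =>
    rw [sub_smul, one_smul, ← add_sub_assoc, ← ih, eq_sub_iff_add_eq, ← hstep z hz, sub_add_cancel]

theorem hasDerivWithinAt_prod_iff {𝕜 E F : Type*} [NontriviallyNormedField 𝕜]
    [NormedAddCommGroup E] [NormedSpace 𝕜 E] [NormedAddCommGroup F] [NormedSpace 𝕜 F]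
    {u : 𝕜 → E × F} {v : E × F} {S : Set 𝕜} {k : 𝕜} :
    HasDerivWithinAt u v S k ↔
      HasDerivWithinAt (fun k ↦ (u k).1) v.1 S k ∧ HasDerivWithinAt (fun k ↦ (u k).2) v.2 S k :=
  ⟨fun h ↦ ⟨(ContinuousLinearMap.fst 𝕜 E F).hasFDerivAt.comp_hasDerivWithinAt k h,
    (ContinuousLinearMap.snd 𝕜 E F).hasFDerivAt.comp_hasDerivWithinAt k h⟩, fun h ↦ h.1.prodMk h.2⟩

end General

section Exponential

theorem convex_preimage_cexp_ball (R : ℝ) : Convex ℝ (Complex.exp ⁻¹' ball 0 R) := by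
  have heq : Complex.exp ⁻¹' ball 0 R = {ζ | ζ ∈ univ ∧ Real.exp ζ.re < R} := by
    ext ζ
    simp [Complex.norm_exp]
  rw [heq]
  exact (convexOn_exp.comp_linearMap Complex.reLm).convex_lt R

theorem isOpen_preimage_cexp_ball (R : ℝ) : IsOpen (Complex.exp ⁻¹' ball 0 R) :=
  isOpen_ball.preimage Complex.continuous_exp

theorem cexp_nat_mul_add_nat_mul (n m : ℕ) (ξ η : ℂ) :
    Complex.exp (n * ξ + m * η) = Complex.exp ξ ^ n * Complex.exp η ^ m := by
  rw [Complex.exp_add, Complex.exp_nat_mul, Complex.exp_nat_mul]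

theorem exists_continuousOn_Icc_cexp_eq {x : ℝ → ℂ} {k₀ k₁ : ℝ} (hk : k₀ ≤ k₁)
    (hx : ContinuousOn x (Icc k₀ k₁)) (hx0 : ∀ k ∈ Icc k₀ k₁, x k ≠ 0) :
    ∃ ξ : ℝ → ℂ, ContinuousOn ξ (Icc k₀ k₁) ∧ ∀ k ∈ Icc k₀ k₁, Complex.exp (ξ k) = x k := by
  have : ContractibleSpace (univ : Set ℝ) := convex_univ.contractibleSpace univ_nonempty
  obtain ⟨ξ, hξ, hξx⟩ := Complex.exists_continuousOn_eqOn_exp_comp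
    (SimplyConnectedSpace.ofContractible (univ : Set ℝ)) isOpen_univ
    (g := IccExtend hk ((Icc k₀ k₁).domRestrict x)) hx.domRestrict.Icc_extend'.continuousOn
    (by rintro ⟨k, -, hk0⟩; exact hx0 _ (projIcc k₀ k₁ hk k).2 hk0)
  exact ⟨ξ, hξ.mono (subset_univ _), fun k hk ↦ (hξx (mem_univ k)).trans (IccExtend_of_mem _ _ hk)⟩

/-- Near each time, the continuous logarithm is the composition of the path with a local inverse of
`exp`. -/
theorem differentiableWithinAt_of_cexp {ξ : ℝ → ℂ} {S : Set ℝ} {k : ℝ} (hk : k ∈ S)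
    (hξ : ContinuousWithinAt ξ S k)
    (h : DifferentiableWithinAt ℝ (fun k ↦ Complex.exp (ξ k)) S k) :
    DifferentiableWithinAt ℝ ξ S k := by
  have hexp := Complex.hasStrictDerivAt_exp (ξ k)
  have hne := Complex.exp_ne_zero (ξ k)
  have hleft : ∀ᶠ k' in nhdsWithin k S,
      ξ k' = (hexp.localInverse _ _ _ hne ∘ fun k ↦ Complex.exp (ξ k)) k' :=
    (hξ.eventually (hexp.hasStrictFDerivAt_equiv hne).eventually_left_inverse).mono fun _ h ↦ h.symm
  have hinv : DifferentiableAt ℝ (hexp.localInverse _ _ _ hne) (Complex.exp (ξ k)) :=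
    (hexp.to_localInverse hne).hasDerivAt.differentiableAt.restrictScalars ℝ
  exact (hinv.comp_differentiableWithinAt k h).congr_of_eventuallyEq_of_mem hleft hk

theorem exists_differentiableOn_Icc_cexp_eq {x : ℝ → ℂ} {k₀ k₁ : ℝ} (hk : k₀ ≤ k₁)
    (hx : DifferentiableOn ℝ x (Icc k₀ k₁)) (hx0 : ∀ k ∈ Icc k₀ k₁, x k ≠ 0) :
    ∃ ξ : ℝ → ℂ, DifferentiableOn ℝ ξ (Icc k₀ k₁) ∧ ∀ k ∈ Icc k₀ k₁, Complex.exp (ξ k) = x k := by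
  obtain ⟨ξ, hξ, hξx⟩ := exists_continuousOn_Icc_cexp_eq hk hx.continuousOn hx0
  exact ⟨ξ, fun k hk ↦ differentiableWithinAt_of_cexp hk (hξ k hk)
    ((hx k hk).congr hξx (hξx k hk)), hξx⟩

end Exponential

section Foliation

/-- The stratum `S_{x,y} = ℂ² × {0 < |x| < r, 0 < |y| < r}`. -/
def stratum (r : ℝ) : Set (ℂ × ℂ × ℂ × ℂ) :=
  {p | (0 < ‖p.2.2.1‖ ∧ ‖p.2.2.1‖ < r) ∧ (0 < ‖p.2.2.2‖ ∧ ‖p.2.2.2‖ < r)}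

/-- The vector field `X̄ = ∂/∂t + X`. -/
def fieldX (a b m n : ℕ) (p : ℂ × ℂ × ℂ × ℂ) : ℂ × ℂ × ℂ × ℂ :=
  (1, 0, p.2.2.1 ^ a * p.2.2.2 ^ b * (m * p.2.2.1), -(p.2.2.1 ^ a * p.2.2.2 ^ b) * (n * p.2.2.2))

/-- The vector field `Ȳ = ∂/∂s + Y`. -/
noncomputable def fieldY (a b m n : ℕ) (g f : ℂ → ℂ) (p : ℂ × ℂ × ℂ × ℂ) : ℂ × ℂ × ℂ × ℂ :=
  (0, 1,
    g (p.2.2.1 ^ n * p.2.2.2 ^ m) * (p.2.2.1 *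
      (-(b * m) + p.2.2.1 ^ a * p.2.2.2 ^ b * f (p.2.2.1 ^ n * p.2.2.2 ^ m))),
    g (p.2.2.1 ^ n * p.2.2.2 ^ m) * (p.2.2.2 *
      (a * m - n / m * (p.2.2.1 ^ a * p.2.2.2 ^ b * f (p.2.2.1 ^ n * p.2.2.2 ^ m)))))

/-- The covering map `(t, s, ξ, η) ↦ (t, s, e^ξ, e^η)`; its restriction over `stratum r` is the
universal cover of the stratum. -/
noncomputable def logCover (u : ℂ × ℂ × ℂ × ℂ) : ℂ × ℂ × ℂ × ℂ :=
  (u.1, u.2.1, Complex.exp u.2.2.1, Complex.exp u.2.2.2)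

/-- The deck transformation of `logCover` with winding numbers `j` and `l`. -/
noncomputable def deck (j l : ℤ) (u : ℂ × ℂ × ℂ × ℂ) : ℂ × ℂ × ℂ × ℂ :=
  (u.1, u.2.1, u.2.2.1 + j * (2 * Real.pi * Complex.I), u.2.2.2 + l * (2 * Real.pi * Complex.I))

/-- The derivative, with respect to `ζ = log z`, of the transcendental part of the first
integral `logIntegral`. -/
noncomputable def integralDensity (a b m n : ℕ) (g f : ℂ → ℂ) (z : ℂ) : ℂ × ℂ :=
  (f z / m ^ 2, -1 / ((a * m - b * n) * m * g z))

/-- `P` is a primitive of `ζ ↦ integralDensity a b m n g f (exp ζ)` where `|e^ζ| < ρ`. -/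
def IsDensityPrimitive (a b m n : ℕ) (g f : ℂ → ℂ) (ρ : ℝ) (P : ℂ → ℂ × ℂ) : Prop :=
  ∀ ζ ∈ Complex.exp ⁻¹' ball 0 ρ, HasDerivAt P (integralDensity a b m n g f (Complex.exp ζ)) ζ

/-- The first integral of the foliation in the coordinates `(t, s, ξ, η)` of `logCover`, where `P`
satisfies `IsDensityPrimitive`. -/
noncomputable def logIntegral (a b m n : ℕ) (P : ℂ → ℂ × ℂ) (u : ℂ × ℂ × ℂ × ℂ) : ℂ × ℂ :=
  (Complex.exp (-(a * u.2.2.1 + b * u.2.2.2)) + (a * m - b * n) * u.1, u.2.1) +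
    P (n * u.2.2.1 + m * u.2.2.2)

/-- The differential of `logIntegral` at a point lying over `(x, y)`, applied to the tangent vector
`v`. -/
noncomputable def logIntegralDeriv (a b m n : ℕ) (g f : ℂ → ℂ) (x y : ℂ)
    (v : ℂ × ℂ × ℂ × ℂ) : ℂ × ℂ :=
  (-(a * v.2.2.1 + b * v.2.2.2) / (x ^ a * y ^ b) + (a * m - b * n) * v.1, v.2.1) +
    (n * v.2.2.1 + m * v.2.2.2) • integralDensity a b m n g f (x ^ n * y ^ m)

/-- The point over `q = (ξ, η)` at which `logIntegral a b m n P` takes the value `c`. -/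
noncomputable def fibrePoint (a b m n : ℕ) (P : ℂ → ℂ × ℂ) (c q : ℂ × ℂ) : ℂ × ℂ × ℂ × ℂ :=
  ((c.1 - Complex.exp (-(a * q.1 + b * q.2)) - (P (n * q.1 + m * q.2)).1) / (a * m - b * n),
    c.2 - (P (n * q.1 + m * q.2)).2, q)

variable {a b m n : ℕ} {g f : ℂ → ℂ} {P : ℂ → ℂ × ℂ} {ρ r : ℝ}

theorem logCover_mem_stratum_iff {u : ℂ × ℂ × ℂ × ℂ} :
    logCover u ∈ stratum r ↔
      u.2.2 ∈ (Complex.exp ⁻¹' ball 0 r) ×ˢ (Complex.exp ⁻¹' ball 0 r) := by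
  simp [logCover, stratum]

theorem pow_mul_pow_mem_of_mem_stratum (hr : r ^ (n + m) < ρ) {p : ℂ × ℂ × ℂ × ℂ}
    (hp : p ∈ stratum r) : p.2.2.1 ^ n * p.2.2.2 ^ m ∈ ball (0 : ℂ) ρ \ {0} := by
  obtain ⟨⟨hx, hxr⟩, hy, hyr⟩ := hp
  have hlt : ‖p.2.2.1 ^ n * p.2.2.2 ^ m‖ < ρ :=
    calc ‖p.2.2.1 ^ n * p.2.2.2 ^ m‖ = ‖p.2.2.1‖ ^ n * ‖p.2.2.2‖ ^ m := by
          rw [norm_mul, norm_pow, norm_pow]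
      _ ≤ r ^ n * r ^ m := by have := hx.trans hxr; gcongr
      _ = r ^ (n + m) := (pow_add r n m).symm
      _ < ρ := hr
  exact ⟨mem_ball_zero_iff.2 hlt, mul_ne_zero (pow_ne_zero _ (norm_pos_iff.1 hx))
    (pow_ne_zero _ (norm_pos_iff.1 hy))⟩

theorem nat_mul_add_nat_mul_mem_preimage_cexp_ball (hr : r ^ (n + m) < ρ) {u : ℂ × ℂ × ℂ × ℂ}
    (hu : logCover u ∈ stratum r) :
    n * u.2.2.1 + m * u.2.2.2 ∈ Complex.exp ⁻¹' ball 0 ρ := by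
  rw [mem_preimage, cexp_nat_mul_add_nat_mul]
  exact (pow_mul_pow_mem_of_mem_stratum hr hu).1

theorem isQuotientMap_restrictPreimage_logCover :
    Topology.IsQuotientMap ((stratum r).restrictPreimage logCover) := by
  have hopen : IsOpenMap logCover :=
    .prodMap .id (.prodMap .id (.prodMap Complex.isOpenMap_exp Complex.isOpenMap_exp))
  have hcont : Continuous logCover := by unfold logCover; fun_prop
  refine (hopen.restrictPreimage _).isQuotientMap hcont.restrictPreimage ?_
  rintro ⟨p, hp⟩
  have hlog : logCover (p.1, p.2.1, Complex.log p.2.2.1, Complex.log p.2.2.2) = p := by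
    rw [logCover, Complex.exp_log (norm_pos_iff.1 hp.1.1), Complex.exp_log (norm_pos_iff.1 hp.2.1)]
  exact ⟨⟨_, mem_preimage.2 (hlog.symm ▸ hp)⟩, Subtype.ext hlog⟩

theorem logCover_eq_logCover_iff {u v : ℂ × ℂ × ℂ × ℂ} :
    logCover u = logCover v ↔ ∃ j l : ℤ, u = deck j l v := by
  simp only [logCover, deck, Prod.ext_iff, Complex.exp_eq_exp_iff_exists_int]
  grind

theorem logIntegral_deck {κ : ℂ × ℂ}
    (hκ : ∀ ζ ∈ Complex.exp ⁻¹' ball 0 ρ, ∀ j : ℤ,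
      P (ζ + j * (2 * Real.pi * Complex.I)) = P ζ + j • κ) {u : ℂ × ℂ × ℂ × ℂ}
    (hu : n * u.2.2.1 + m * u.2.2.2 ∈ Complex.exp ⁻¹' ball 0 ρ) (j l : ℤ) :
    logIntegral a b m n P (deck j l u) = logIntegral a b m n P u + (n * j + m * l) • κ := by
  have hexp : Complex.exp (-(a * (u.2.2.1 + j * (2 * Real.pi * Complex.I)) +
      b * (u.2.2.2 + l * (2 * Real.pi * Complex.I)))) =
      Complex.exp (-(a * u.2.2.1 + b * u.2.2.2)) :=
    Complex.exp_eq_exp_iff_exists_int.2 ⟨-(a * j + b * l), by push_cast; ring⟩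
  have hP : P (n * (u.2.2.1 + j * (2 * Real.pi * Complex.I)) +
      m * (u.2.2.2 + l * (2 * Real.pi * Complex.I))) =
      P (n * u.2.2.1 + m * u.2.2.2) + (n * j + m * l) • κ := by
    rw [← hκ _ hu]
    congr 1
    push_cast
    ring
  simp only [logIntegral, deck, hexp, hP, add_assoc]

theorem mem_span_fields_iff {p : ℂ × ℂ × ℂ × ℂ} (hx : p.2.2.1 ≠ 0) (hy : p.2.2.2 ≠ 0)
    (v : ℂ × ℂ × ℂ × ℂ) :
    (v.1, v.2.1, p.2.2.1 * v.2.2.1, p.2.2.2 * v.2.2.2) ∈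
        Submodule.span ℂ ((fun V ↦ V p) '' {fieldX a b m n, fieldY a b m n g f}) ↔
      v.2.2.1 = v.1 * (p.2.2.1 ^ a * p.2.2.2 ^ b * m) + v.2.1 * (g (p.2.2.1 ^ n * p.2.2.2 ^ m) *
        (-(b * m) + p.2.2.1 ^ a * p.2.2.2 ^ b * f (p.2.2.1 ^ n * p.2.2.2 ^ m))) ∧
      v.2.2.2 = -v.1 * (p.2.2.1 ^ a * p.2.2.2 ^ b * n) + v.2.1 * (g (p.2.2.1 ^ n * p.2.2.2 ^ m) *
        (a * m - n / m * (p.2.2.1 ^ a * p.2.2.2 ^ b * f (p.2.2.1 ^ n * p.2.2.2 ^ m)))) := by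
  simp only [image_pair, Submodule.mem_span_pair, fieldX, fieldY, Prod.smul_mk, Prod.mk_add_mk,
    smul_eq_mul, Prod.mk.injEq]
  constructor
  · rintro ⟨α, β, hα, hβ, hξ, hη⟩
    obtain rfl : α = v.1 := by simpa using hα
    obtain rfl : β = v.2.1 := by simpa using hβ
    refine ⟨mul_left_cancel₀ hx ?_, mul_left_cancel₀ hy ?_⟩
    · linear_combination -hξ
    · linear_combination -hη
  · rintro ⟨hξ, hη⟩
    refine ⟨v.1, v.2.1, by ring, by ring, ?_, ?_⟩
    · linear_combination -p.2.2.1 * hξ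
    · linear_combination -p.2.2.2 * hη

theorem logIntegralDeriv_eq_zero_iff {x y : ℂ} (hx : x ≠ 0) (hy : y ≠ 0) (hm : m ≠ 0)
    (hD : (a * m - b * n : ℂ) ≠ 0) (hg : g (x ^ n * y ^ m) ≠ 0) (v : ℂ × ℂ × ℂ × ℂ) :
    logIntegralDeriv a b m n g f x y v = 0 ↔
      a * v.2.2.1 + b * v.2.2.2 = (a * m - b * n) * (x ^ a * y ^ b) *
        (v.1 + g (x ^ n * y ^ m) * f (x ^ n * y ^ m) / m * v.2.1) ∧
      n * v.2.2.1 + m * v.2.2.2 = (a * m - b * n) * m * g (x ^ n * y ^ m) * v.2.1 := by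
  have hm' : (m : ℂ) ≠ 0 := mod_cast hm
  have hU : x ^ a * y ^ b ≠ 0 := mul_ne_zero (pow_ne_zero _ hx) (pow_ne_zero _ hy)
  simp only [logIntegralDeriv, integralDensity, Prod.smul_mk, Prod.mk_add_mk, smul_eq_mul,
    Prod.mk_eq_zero]
  generalize (a * m - b * n : ℂ) = D at hD ⊢
  have hsnd : v.2.1 + (n * v.2.2.1 + m * v.2.2.2) * (-1 / (D * m * g (x ^ n * y ^ m))) = 0 ↔
      n * v.2.2.1 + m * v.2.2.2 = D * m * g (x ^ n * y ^ m) * v.2.1 := by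
    rw [mul_div, mul_neg_one, neg_div, add_neg_eq_zero,
      eq_div_iff (mul_ne_zero (mul_ne_zero hD hm') hg), eq_comm, mul_comm v.2.1]
  rw [hsnd]
  refine and_congr_left fun h ↦ ?_
  rw [h, add_assoc, neg_div, neg_add_eq_zero, div_eq_iff hU]
  field_simp

theorem mem_span_fields_iff_logIntegralDeriv_eq_zero (hm : m ≠ 0) (hD : (a * m - b * n : ℂ) ≠ 0)
    (hg : ∀ z ∈ ball (0 : ℂ) ρ \ {0}, g z ≠ 0) (hr : r ^ (n + m) < ρ) {p : ℂ × ℂ × ℂ × ℂ}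
    (hp : p ∈ stratum r) (v : ℂ × ℂ × ℂ × ℂ) :
    (v.1, v.2.1, p.2.2.1 * v.2.2.1, p.2.2.2 * v.2.2.2) ∈
        Submodule.span ℂ ((fun V ↦ V p) '' {fieldX a b m n, fieldY a b m n g f}) ↔
      logIntegralDeriv a b m n g f p.2.2.1 p.2.2.2 v = 0 := by
  have hx : p.2.2.1 ≠ 0 := norm_pos_iff.1 hp.1.1
  have hy : p.2.2.2 ≠ 0 := norm_pos_iff.1 hp.2.1
  have hm' : (m : ℂ) ≠ 0 := mod_cast hm
  rw [mem_span_fields_iff hx hy,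
    logIntegralDeriv_eq_zero_iff hx hy hm hD (hg _ (pow_mul_pow_mem_of_mem_stratum hr hp))]
  constructor
  · rintro ⟨hξ, hη⟩
    rw [hξ, hη]
    constructor <;> field_simp <;> ring
  · rintro ⟨h₁, h₂⟩
    field_simp at h₁
    refine ⟨mul_left_cancel₀ hD ?_, ?_⟩
    · linear_combination h₁ - b * h₂
    · field_simp
      refine mul_left_cancel₀ hD ?_
      linear_combination a * m * h₂ - n * h₁

theorem hasDerivWithinAt_logCover {u : ℝ → ℂ × ℂ × ℂ × ℂ} {v : ℂ × ℂ × ℂ × ℂ} {S : Set ℝ} {k : ℝ}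
    (hu : HasDerivWithinAt u v S k) :
    HasDerivWithinAt (fun k ↦ logCover (u k))
      (v.1, v.2.1, Complex.exp (u k).2.2.1 * v.2.2.1, Complex.exp (u k).2.2.2 * v.2.2.2) S k := by
  simp only [hasDerivWithinAt_prod_iff] at hu
  exact hu.1.prodMk (hu.2.1.prodMk (hu.2.2.1.cexp.prodMk hu.2.2.2.cexp))

theorem hasDerivWithinAt_logIntegral {u : ℝ → ℂ × ℂ × ℂ × ℂ} {v : ℂ × ℂ × ℂ × ℂ} {S : Set ℝ}
    {k : ℝ} (hu : HasDerivWithinAt u v S k)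
    (hP : HasDerivAt P (integralDensity a b m n g f
      (Complex.exp (n * (u k).2.2.1 + m * (u k).2.2.2))) (n * (u k).2.2.1 + m * (u k).2.2.2)) :
    HasDerivWithinAt (fun k ↦ logIntegral a b m n P (u k))
      (logIntegralDeriv a b m n g f (Complex.exp (u k).2.2.1) (Complex.exp (u k).2.2.2) v) S k := by
  simp only [hasDerivWithinAt_prod_iff] at hu
  obtain ⟨ht, hs, hξ, hη⟩ := hu
  have hU := ((hξ.const_mul (a : ℂ)).fun_add (hη.const_mul (b : ℂ))).fun_neg.cexp
  have hP' := hP.scomp_hasDerivWithinAt k ((hξ.const_mul (n : ℂ)).fun_add (hη.const_mul (m : ℂ)))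
  refine (((hU.add (ht.const_mul (a * m - b * n : ℂ))).prodMk hs).add hP').congr_deriv ?_
  rw [logIntegralDeriv, ← cexp_nat_mul_add_nat_mul, ← cexp_nat_mul_add_nat_mul, Complex.exp_neg]
  congr 3
  ring

theorem logIntegral_fibrePoint (hD : (a * m - b * n : ℂ) ≠ 0) (c q : ℂ × ℂ) :
    logIntegral a b m n P (fibrePoint a b m n P c q) = c := by
  ext <;> simp only [logIntegral, fibrePoint, Prod.fst_add, Prod.snd_add] <;> field_simp <;> ring

theorem fibrePoint_logIntegral (hD : (a * m - b * n : ℂ) ≠ 0) (u : ℂ × ℂ × ℂ × ℂ) :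
    fibrePoint a b m n P (logIntegral a b m n P u) u.2.2 = u := by
  ext <;> simp only [logIntegral, fibrePoint, Prod.fst_add, Prod.snd_add] <;> field_simp <;> ring

theorem differentiableAt_fibrePoint {c q : ℂ × ℂ} (hP : DifferentiableAt ℂ P (n * q.1 + m * q.2)) :
    DifferentiableAt ℂ (fibrePoint a b m n P c) q := by
  have hPq : DifferentiableAt ℂ (fun q : ℂ × ℂ ↦ P (n * q.1 + m * q.2)) q :=
    hP.comp (f := fun q : ℂ × ℂ ↦ (n * q.1 + m * q.2 : ℂ)) q (by fun_prop)
  unfold fibrePoint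
  fun_prop

theorem leafStepC_of_logIntegral_eq (hm : m ≠ 0) (hD : (a * m - b * n : ℂ) ≠ 0)
    (hg : ∀ z ∈ ball (0 : ℂ) ρ \ {0}, g z ≠ 0) (hr : r ^ (n + m) < ρ)
    (hP : IsDensityPrimitive a b m n g f ρ P)
    {u v : ℂ × ℂ × ℂ × ℂ} (hu : logCover u ∈ stratum r) (hv : logCover v ∈ stratum r)
    (huv : logIntegral a b m n P u = logIntegral a b m n P v) :
    LeafStepC (stratum r) {fieldX a b m n, fieldY a b m n g f} ⟨_, hu⟩ ⟨_, hv⟩ := by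
  let w (k : ℝ) : ℂ × ℂ × ℂ × ℂ :=
    fibrePoint a b m n P (logIntegral a b m n P u) (AffineMap.lineMap u.2.2 v.2.2 k)
  have hw0 : w 0 = u := by
    simp only [w, AffineMap.lineMap_apply_zero, fibrePoint_logIntegral hD]
  have hw1 : w 1 = v := by
    simp only [w, AffineMap.lineMap_apply_one, huv, fibrePoint_logIntegral hD]
  have hwU {k : ℝ} (hk : k ∈ Icc (0 : ℝ) 1) : logCover (w k) ∈ stratum r :=
    logCover_mem_stratum_iff.2 (((convex_preimage_cexp_ball r).prod
      (convex_preimage_cexp_ball r)).lineMap_mem (logCover_mem_stratum_iff.1 hu)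
        (logCover_mem_stratum_iff.1 hv) hk)
  refine ⟨fun k ↦ logCover (w k), fun k hk ↦ hwU hk, congrArg logCover hw0,
    congrArg logCover hw1, fun k hk ↦ ?_⟩
  have hζ := nat_mul_add_nat_mul_mem_preimage_cexp_ball hr (hwU hk)
  have hw : HasDerivWithinAt w (derivWithin w (Icc 0 1) k) (Icc 0 1) k :=
    (((differentiableAt_fibrePoint (hP _ hζ).differentiableAt).restrictScalars ℝ).comp k
      (f := AffineMap.lineMap u.2.2 v.2.2)
      AffineMap.hasDerivAt_lineMap.differentiableAt).differentiableWithinAt.hasDerivWithinAt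
  refine ⟨_, ?_, hasDerivWithinAt_logCover hw⟩
  have hconst : HasDerivWithinAt (fun k ↦ logIntegral a b m n P (w k)) 0 (Icc 0 1) k := by
    simpa only [w, logIntegral_fibrePoint hD] using hasDerivWithinAt_const k _ _
  exact (mem_span_fields_iff_logIntegralDeriv_eq_zero hm hD hg hr (hwU hk) _).2
    ((uniqueDiffOn_Icc_zero_one k hk).eq_deriv _ (hasDerivWithinAt_logIntegral hw (hP _ hζ)) hconst)

theorem exists_lift_logCover {γ : ℝ → ℂ × ℂ × ℂ × ℂ} {k₀ k₁ : ℝ} (hk : k₀ ≤ k₁)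
    (hγ : DifferentiableOn ℝ γ (Icc k₀ k₁)) (hx : ∀ k ∈ Icc k₀ k₁, (γ k).2.2.1 ≠ 0)
    (hy : ∀ k ∈ Icc k₀ k₁, (γ k).2.2.2 ≠ 0) :
    ∃ w, DifferentiableOn ℝ w (Icc k₀ k₁) ∧ ∀ k ∈ Icc k₀ k₁, logCover (w k) = γ k := by
  obtain ⟨ξ, hξ, hξx⟩ := exists_differentiableOn_Icc_cexp_eq hk hγ.snd.snd.fst hx
  obtain ⟨η, hη, hηy⟩ := exists_differentiableOn_Icc_cexp_eq hk hγ.snd.snd.snd hy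
  refine ⟨fun k ↦ ((γ k).1, (γ k).2.1, ξ k, η k), hγ.fst.prodMk (hγ.snd.fst.prodMk (hξ.prodMk hη)),
    fun k hk ↦ ?_⟩
  rw [logCover, hξx k hk, hηy k hk]

theorem exists_logIntegral_eq_of_leafStepC (hm : m ≠ 0) (hD : (a * m - b * n : ℂ) ≠ 0)
    (hg : ∀ z ∈ ball (0 : ℂ) ρ \ {0}, g z ≠ 0) (hr : r ^ (n + m) < ρ)
    (hP : IsDensityPrimitive a b m n g f ρ P)
    {p q : stratum r} (hpq : LeafStepC (stratum r) {fieldX a b m n, fieldY a b m n g f} p q) :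
    ∃ u v, logCover u = p ∧ logCover v = q ∧
      logIntegral a b m n P u = logIntegral a b m n P v := by
  obtain ⟨γ, hγU, hγ0, hγ1, hγ⟩ := hpq
  obtain ⟨w, hw, hwγ⟩ := exists_lift_logCover zero_le_one
    (fun k hk ↦ (hγ k hk).elim fun _ h ↦ h.2.differentiableWithinAt)
    (fun k hk ↦ norm_pos_iff.1 (hγU k hk).1.1) (fun k hk ↦ norm_pos_iff.1 (hγU k hk).2.1)
  have hderiv (k : ℝ) (hk : k ∈ Icc (0 : ℝ) 1) :
      HasDerivWithinAt (fun k ↦ logIntegral a b m n P (w k)) 0 (Icc 0 1) k := by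
    have hwU : logCover (w k) ∈ stratum r := hwγ k hk ▸ hγU k hk
    have hwk := (hw k hk).hasDerivWithinAt
    obtain ⟨d, hd, hγd⟩ := hγ k hk
    obtain rfl := (uniqueDiffOn_Icc_zero_one k hk).eq_deriv _ hγd
      ((hasDerivWithinAt_logCover hwk).congr (fun k hk ↦ (hwγ k hk).symm) (hwγ k hk).symm)
    rw [← hwγ k hk] at hd
    have hzero := (mem_span_fields_iff_logIntegralDeriv_eq_zero hm hD hg hr hwU _).1 hd
    exact (hasDerivWithinAt_logIntegral hwk
      (hP _ (nat_mul_add_nat_mul_mem_preimage_cexp_ball hr hwU))).congr_deriv hzero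
  have hconst := constant_of_derivWithin_zero (fun k hk ↦ (hderiv k hk).differentiableWithinAt)
    (fun k hk ↦ (hderiv k (Ico_subset_Icc_self hk)).derivWithin
      (uniqueDiffOn_Icc_zero_one k (Ico_subset_Icc_self hk))) 1 (right_mem_Icc.2 zero_le_one)
  exact ⟨w 0, w 1, (hwγ 0 (left_mem_Icc.2 zero_le_one)).trans hγ0,
    (hwγ 1 (right_mem_Icc.2 zero_le_one)).trans hγ1, hconst.symm⟩

theorem leafStepC_logCover_iff (hm : m ≠ 0) (hD : (a * m - b * n : ℂ) ≠ 0)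
    (hg : ∀ z ∈ ball (0 : ℂ) ρ \ {0}, g z ≠ 0) (hr : r ^ (n + m) < ρ)
    (hP : IsDensityPrimitive a b m n g f ρ P) {κ : ℂ × ℂ}
    (hκ : ∀ ζ ∈ Complex.exp ⁻¹' ball 0 ρ, ∀ j : ℤ,
      P (ζ + j * (2 * Real.pi * Complex.I)) = P ζ + j • κ)
    {u v : ℂ × ℂ × ℂ × ℂ} (hu : logCover u ∈ stratum r) (hv : logCover v ∈ stratum r) :
    LeafStepC (stratum r) {fieldX a b m n, fieldY a b m n g f} ⟨_, hu⟩ ⟨_, hv⟩ ↔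
      (logIntegral a b m n P u : (ℂ × ℂ) ⧸ AddSubgroup.zmultiples (n.gcd m • κ)) =
        logIntegral a b m n P v := by
  have hdeck {w : ℂ × ℂ × ℂ × ℂ} (hw : logCover w ∈ stratum r) (j l : ℤ) :
      logIntegral a b m n P (deck j l w) = logIntegral a b m n P w + (n * j + m * l) • κ :=
    logIntegral_deck hκ (nat_mul_add_nat_mul_mem_preimage_cexp_ball hr hw) j l
  rw [QuotientAddGroup.eq, mem_zmultiples_gcd_nsmul_iff]
  constructor
  · intro h
    obtain ⟨u', v', hu', hv', heq⟩ := exists_logIntegral_eq_of_leafStepC hm hD hg hr hP h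
    obtain ⟨j, l, rfl⟩ := logCover_eq_logCover_iff.1 hu'
    obtain ⟨j', l', rfl⟩ := logCover_eq_logCover_iff.1 hv'
    rw [hdeck hu, hdeck hv] at heq
    refine ⟨j - j', l - l', ?_⟩
    linear_combination -heq
  · rintro ⟨j, l, h⟩
    have hu' : logCover (deck j l u) = logCover u := logCover_eq_logCover_iff.2 ⟨j, l, rfl⟩
    have hstep := leafStepC_of_logIntegral_eq hm hD hg hr hP (hu'.symm ▸ hu) hv
      (by rw [hdeck hu, ← h, add_neg_cancel_left])
    simpa only [hu'] using hstep

theorem exists_isDensityPrimitive (a b m n : ℕ) (hg : DifferentiableOn ℂ g (ball (0 : ℂ) ρ \ {0}))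
    (hgne : ∀ z ∈ ball (0 : ℂ) ρ \ {0}, g z ≠ 0)
    (hf : DifferentiableOn ℂ f (ball (0 : ℂ) ρ \ {0})) :
    ∃ P, IsDensityPrimitive a b m n g f ρ P := by
  have hmaps : MapsTo Complex.exp (Complex.exp ⁻¹' ball 0 ρ) (ball 0 ρ \ {0}) :=
    fun ζ hζ ↦ ⟨hζ, Complex.exp_ne_zero ζ⟩
  have hdensity : DifferentiableOn ℂ (integralDensity a b m n g f) (ball 0 ρ \ {0}) := by
    refine ((hf.div_const (m ^ 2 : ℂ)).prodMk ((hg.fun_inv hgne).const_mul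
      (-1 / ((a * m - b * n) * m : ℂ)))).congr fun z _ ↦ ?_
    rw [integralDensity, ← div_div, div_eq_mul_inv (_ / _)]
  obtain ⟨P, hP⟩ := (convex_preimage_cexp_ball ρ).exists_forall_hasDerivWithinAt
    (hdensity.comp Complex.differentiable_exp.differentiableOn hmaps)
  exact ⟨P, fun ζ hζ ↦ (hP ζ hζ).hasDerivAt ((isOpen_preimage_cexp_ball ρ).mem_nhds hζ)⟩

theorem IsDensityPrimitive.exists_period (hP : IsDensityPrimitive a b m n g f ρ P) :
    ∃ κ : ℂ × ℂ, ∀ ζ ∈ Complex.exp ⁻¹' ball 0 ρ, ∀ j : ℤ,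
      P (ζ + j * (2 * Real.pi * Complex.I)) = P ζ + j • κ :=
  exists_add_int_mul_eq_add_zsmul (isOpen_preimage_cexp_ball ρ)
    (convex_preimage_cexp_ball ρ).isPreconnected hP
    (fun ζ ↦ by rw [mem_preimage, mem_preimage, Complex.exp_periodic])
    (Complex.exp_periodic.comp (integralDensity a b m n g f))

theorem continuousOn_logIntegral (hr : r ^ (n + m) < ρ) (hP : IsDensityPrimitive a b m n g f ρ P) :
    ContinuousOn (logIntegral a b m n P) (logCover ⁻¹' stratum r) := by
  have hPcont : ContinuousOn (fun u : ℂ × ℂ × ℂ × ℂ ↦ P (n * u.2.2.1 + m * u.2.2.2))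
      (logCover ⁻¹' stratum r) :=
    ContinuousOn.comp (fun ζ hζ ↦ (hP ζ hζ).continuousAt.continuousWithinAt)
      (f := fun u : ℂ × ℂ × ℂ × ℂ ↦ (n * u.2.2.1 + m * u.2.2.2 : ℂ)) (by fun_prop)
      fun u hu ↦ nat_mul_add_nat_mul_mem_preimage_cexp_ball hr hu
  exact ContinuousOn.add (by fun_prop) hPcont

end Foliation

theorem leaf_space_over_Sxy_hausdorff_general {a b m n : ℕ} (hm : m ≠ 0) (hab : a * m ≠ b * n)
    {ρ : ℝ} {g f : ℂ → ℂ} (hg : DifferentiableOn ℂ g (ball (0 : ℂ) ρ \ {0}))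
    (hgne : ∀ z ∈ ball (0 : ℂ) ρ \ {0}, g z ≠ 0)
    (hf : DifferentiableOn ℂ f (ball (0 : ℂ) ρ \ {0})) {r : ℝ} (hr : r ^ (n + m) < ρ) :
    T2Space (Quot (LeafStepC (stratum r) {fieldX a b m n, fieldY a b m n g f})) := by
  have hD : (a * m - b * n : ℂ) ≠ 0 := sub_ne_zero.2 (mod_cast hab)
  obtain ⟨P, hP⟩ := exists_isDensityPrimitive a b m n hg hgne hf
  obtain ⟨κ, hκ⟩ := hP.exists_period
  exact t2Space_quot_of_isQuotientMap isQuotientMap_restrictPreimage_logCover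
    (QuotientAddGroup.continuous_mk.comp
      (continuousOn_iff_continuous_domRestrict.1 (continuousOn_logIntegral hr hP)))
    fun u v ↦ leafStepC_logCover_iff hm hD hgne hr hP hκ u.2 v.2

/-- **Proposition 4.1.**
The leaf space of the foliation spanned by `X̄ = ∂/∂t + X` and `Ȳ = ∂/∂s + Y` over the
stratum `S_{x,y} = ℂ² × {0 < |x| < r', 0 < |y| < r'}` is Hausdorff. -/
theorem leaf_space_over_Sxy_hausdorff
    (a b m n : ℕ) (ha : 0 < a) (hb : 0 < b) (hm : 0 < m) (hn : 0 < n)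
    (hab : (a * m : ℤ) - (b * n : ℤ) = 1 ∨ (a * m : ℤ) - (b * n : ℤ) = -1)
    (ρ : ℝ) (hρ : 0 < ρ) (g f : ℂ → ℂ)
    (hg : DifferentiableOn ℂ g (ball (0 : ℂ) ρ \ {0}))
    (hgne : ∀ z ∈ ball (0 : ℂ) ρ \ {0}, g z ≠ 0)
    (hf : DifferentiableOn ℂ f (ball (0 : ℂ) ρ \ {0}))
    (r : ℕ) (F₁ : ℂ → ℂ) (hF₁ : DifferentiableOn ℂ F₁ (ball (0 : ℂ) ρ))
    (hF₁f : ∀ z ∈ ball (0 : ℂ) ρ \ {0}, F₁ z = z ^ r * f z)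
    (r' : ℝ) (hr' : 0 < r') (hr'ρ : r' ^ (n + m) < ρ) :
    T2Space (Quot (LeafStepC
      {p : ℂ × ℂ × ℂ × ℂ | (0 < ‖p.2.2.1‖ ∧ ‖p.2.2.1‖ < r') ∧ (0 < ‖p.2.2.2‖ ∧ ‖p.2.2.2‖ < r')}
      {fun p : ℂ × ℂ × ℂ × ℂ =>
        ((1 : ℂ), (0 : ℂ),
          p.2.2.1 ^ a * p.2.2.2 ^ b * ((m : ℂ) * p.2.2.1),
          -(p.2.2.1 ^ a * p.2.2.2 ^ b) * ((n : ℂ) * p.2.2.2)),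
       fun p : ℂ × ℂ × ℂ × ℂ =>
        ((0 : ℂ), (1 : ℂ),
          g (p.2.2.1 ^ n * p.2.2.2 ^ m) * (p.2.2.1 *
            (-((b : ℂ) * m) + p.2.2.1 ^ a * p.2.2.2 ^ b * f (p.2.2.1 ^ n * p.2.2.2 ^ m))),
          g (p.2.2.1 ^ n * p.2.2.2 ^ m) * (p.2.2.2 * ((a : ℂ) * m -
            ((n : ℂ) / (m : ℂ)) * (p.2.2.1 ^ a * p.2.2.2 ^ b * f (p.2.2.1 ^ n * p.2.2.2 ^ m)))))})) := by
  have hmn : a * m ≠ b * n := by zify; rcases hab with h | h <;> lia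
  exact leaf_space_over_Sxy_hausdorff_general hm.ne' hmn hg hgne hf hr'ρ
end
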